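/- arXiv:2407.10073 — 2 statements merged into one kernel-verified Lean document; each statement's English description precedes it below -/
import Mathlib

section
/- Assume dom h has diameter at most D > 0 and M_f > 0. Set B := 8 + 12·log(1 + L_f²D²N̄/(16M_f²)) and U(ε̄) := 4(M_f² + ε̄L_f)B/(1−χ)² + N̄ε̄/λ₀. Let μ, ν ≥ 0 be such that φ = f + h is μ-convex, h is ν-convex, and ν ≤ μ, and let d₀ := dist(x̂₀, X*). Then U-PB terminates (produces x_j with φ(x_j) − φ* ≤ ε̄), and the total number of inner iterations (the ones indexed by j) that it performs is at most T + N̄·⌈2·log(λ₀U(ε̄)/(N̄ε̄))⌉, where T may be taken to be any of the following: (i) d₀²U(ε̄)/ε̄² (always valid); (ii) (1/χ)(N̄ + U(ε̄)/(με̄))·log(1 + μd₀²/ε̄), valid when χ > 0 and μ > 0; (iii) (N̄ + U(ε̄)/(νε̄))·log(1 + μd₀²/ε̄), valid when ν > 0. (log is the natural logarithm.) -/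
open scoped RealInnerProductSpace

namespace UPB

theorem descent {E : Type*} [NormedAddCommGroup E] [InnerProductSpace ℝ E]
    (S : Set E) (hS : Convex ℝ S) (f : E → ℝ) (g : E → E) (M L : ℝ)
    (hL : 0 ≤ L)
    (hsub : ∀ x ∈ S, ∀ u ∈ S, f x + ⟪g x, u - x⟫ ≤ f u)
    (hyb : ∀ x ∈ S, ∀ y ∈ S, ‖g x - g y‖ ≤ 2 * M + L * ‖x - y‖)
    (x u : E) (hx : x ∈ S) (hu : u ∈ S) :
    f u - f x - ⟪g x, u - x⟫ ≤ 2 * M * ‖u - x‖ + L / 2 * ‖u - x‖ ^ 2 := by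
  set v := u - x with hv
  have key : ∀ m : ℕ, f u - f x - ⟪g x, v⟫
      ≤ 2 * M * ‖v‖ + L / 2 * ‖v‖ ^ 2 + (L / 2 * ‖v‖ ^ 2) * (1 / ((m : ℝ) + 1)) := by
    intro m
    have hm : (0 : ℝ) < (m : ℝ) + 1 := by positivity
    set d : ℝ := 1 / ((m : ℝ) + 1) with hd
    have hdpos : 0 < d := by positivity
    have hdm : d * ((m : ℝ) + 1) = 1 := by rw [hd]; field_simp
    have step : ∀ i : ℕ, i ≤ m + 1 →
        f (x + ((i : ℝ) * d) • v) - f x - (i * d) * ⟪g x, v⟫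
          ≤ (i * d) * (2 * M * ‖v‖) + L * ‖v‖ ^ 2 * (d ^ 2 * (i * (i + 1) / 2)) := by
      intro i
      induction i with
      | zero => intro _; simp
      | succ i ih =>
        intro hi
        have ih' := ih (by omega)
        have hmem : ∀ k : ℕ, k ≤ m + 1 → x + ((k : ℝ) * d) • v ∈ S := by
          intro k hk
          have h1 : (k : ℝ) * d ≤ 1 := by
            rw [← hdm, mul_comm]
            have : (k : ℝ) ≤ m + 1 := by exact_mod_cast hk
            nlinarith
          exact hS.add_smul_sub_mem hx hu ⟨by positivity, h1⟩
        have hp := hmem i (by omega)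
        have hq := hmem (i + 1) hi
        set q := x + (((i + 1 : ℕ) : ℝ) * d) • v with hqd
        set p := x + ((i : ℝ) * d) • v with hpd
        have h1 := hsub q hq p hp
        have hpq : p - q = (-d) • v := by
          rw [hpd, hqd]; push_cast; module
        rw [hpq, inner_smul_right] at h1
        have h2 := hyb q hq x hx
        have hqx : q - x = (((i + 1 : ℕ) : ℝ) * d) • v := by rw [hqd]; module
        rw [hqx, norm_smul, Real.norm_of_nonneg (by positivity)] at h2
        have h3 : ⟪g q - g x, v⟫ ≤ ‖g q - g x‖ * ‖v‖ := real_inner_le_norm _ _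
        rw [inner_sub_left] at h3
        have h4 : ‖g q - g x‖ * ‖v‖ ≤ (2 * M + L * (((i + 1 : ℕ) : ℝ) * d * ‖v‖)) * ‖v‖ :=
          mul_le_mul_of_nonneg_right h2 (norm_nonneg _)
        push_cast at *
        have h5 : d * ⟪g q, v⟫ ≤ d * (⟪g x, v⟫ + (2 * M + L * (((i : ℝ) + 1) * d * ‖v‖)) * ‖v‖) :=
          mul_le_mul_of_nonneg_left (by linarith) hdpos.le
        have h6 : f q ≤ f p + d * ⟪g q, v⟫ := by linarith
        nlinarith
    have hf := step (m + 1) le_rfl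
    have hone : (((m + 1 : ℕ) : ℝ) * d) = 1 := by push_cast; linarith
    rw [hone] at hf
    have hxu : x + (1 : ℝ) • v = u := by rw [hv]; module
    rw [hxu] at hf
    have e : d ^ 2 * ((((m + 1 : ℕ) : ℝ)) * (((m + 1 : ℕ) : ℝ) + 1) / 2) = 1 / 2 + d / 2 := by
      have : d ^ 2 * ((((m + 1 : ℕ) : ℝ)) * (((m + 1 : ℕ) : ℝ) + 1) / 2)
        = ((((m + 1 : ℕ) : ℝ)) * d) ^ 2 / 2 + ((((m + 1 : ℕ) : ℝ)) * d) * d / 2 := by ring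
      rw [this, hone]; ring
    rw [e] at hf
    nlinarith
  have hlim : Filter.Tendsto (fun m : ℕ => 2 * M * ‖v‖ + L / 2 * ‖v‖ ^ 2
      + (L / 2 * ‖v‖ ^ 2) * (1 / ((m : ℝ) + 1))) Filter.atTop
      (nhds (2 * M * ‖v‖ + L / 2 * ‖v‖ ^ 2 + (L / 2 * ‖v‖ ^ 2) * 0)) :=
    (tendsto_one_div_add_atTop_nhds_zero_nat.const_mul _).const_add _
  have := ge_of_tendsto' hlim key
  simpa using this

/-- quadratic growth at the minimizer of a prox subproblem -/
theorem prox_growth {E : Type*} [NormedAddCommGroup E] [InnerProductSpace ℝ E]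
    (S : Set E) (hS : Convex ℝ S) (G : E → ℝ) (ν lam : ℝ) (hν : 0 ≤ ν) (hlam : 0 < lam)
    (hG : ∀ a ∈ S, ∀ b ∈ S, ∀ α : ℝ, 0 ≤ α → α ≤ 1 →
      G (α • a + (1 - α) • b) ≤ α * G a + (1 - α) * G b - α * (1 - α) * ν / 2 * ‖a - b‖ ^ 2)
    (c x : E) (hx : x ∈ S)
    (hmin : ∀ u ∈ S, G x + ‖x - c‖ ^ 2 / (2 * lam) ≤ G u + ‖u - c‖ ^ 2 / (2 * lam))
    (u : E) (hu : u ∈ S) :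
    G x + ‖x - c‖ ^ 2 / (2 * lam) + (1 + lam * ν) / (2 * lam) * ‖u - x‖ ^ 2
      ≤ G u + ‖u - c‖ ^ 2 / (2 * lam) := by
  set Q := (1 + lam * ν) / (2 * lam) * ‖u - x‖ ^ 2 with hQ
  have hQ0 : 0 ≤ Q := by positivity
  set A := G x + ‖x - c‖ ^ 2 / (2 * lam) + Q - (G u + ‖u - c‖ ^ 2 / (2 * lam)) with hA
  have key : ∀ α : ℝ, 0 < α → α ≤ 1 → A ≤ α * Q := by
    intro α h0 h1
    have hw : α • u + (1 - α) • x ∈ S := hS hu hx h0.le (by linarith) (by ring)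
    have m := hmin _ hw
    have g := hG u hu x hx α h0.le h1
    have nq : ‖α • u + (1 - α) • x - c‖ ^ 2
        = α * ‖u - c‖ ^ 2 + (1 - α) * ‖x - c‖ ^ 2 - α * (1 - α) * ‖u - x‖ ^ 2 := by
      have e1 : α • u + (1 - α) • x - c = α • (u - c) + (1 - α) • (x - c) := by module
      have e2 : u - x = (u - c) - (x - c) := by abel
      rw [e1, e2, norm_add_sq_real, norm_sub_sq_real (u - c) (x - c), norm_smul, norm_smul,
        real_inner_smul_left, real_inner_smul_right, mul_pow, mul_pow,
        Real.norm_eq_abs, Real.norm_eq_abs, sq_abs, sq_abs]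
      ring
    rw [nq] at m
    have hq' : Q = ‖u - x‖ ^ 2 / (2 * lam) + ν / 2 * ‖u - x‖ ^ 2 := by
      rw [hQ]; field_simp
    have e3 : (α * ‖u - c‖ ^ 2 + (1 - α) * ‖x - c‖ ^ 2 - α * (1 - α) * ‖u - x‖ ^ 2) / (2 * lam)
      = α * (‖u - c‖ ^ 2 / (2 * lam)) + (1 - α) * (‖x - c‖ ^ 2 / (2 * lam))
        - α * (1 - α) * (‖u - x‖ ^ 2 / (2 * lam)) := by ring
    rw [e3] at m
    have : α * A ≤ α * (α * Q) := by
      rw [hA, hq']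
      nlinarith
    exact le_of_mul_le_mul_left this h0
  by_contra hcon
  have hApos : 0 < A := by rw [hA]; linarith [not_le.mp hcon]
  have h1 := key (A / (2 * (A + Q))) (by positivity) (by
    rw [div_le_one (by positivity)]; linarith)
  rw [div_mul_eq_mul_div, le_div_iff₀ (by positivity)] at h1
  nlinarith

theorem pot_step (M L lam s t d : ℝ) (hM : 0 < M) (hL : 0 ≤ L) (hlam : 0 < lam) (ht : 0 < t)
    (h1 : t ≤ s - d ^ 2 / (2 * lam)) (h2 : t ≤ 2 * M * d + L / 2 * d ^ 2) (hd : 0 ≤ d) :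
    1 ≤ 8 * lam * M ^ 2 * (1 / t - 1 / s) + (2 * (lam * L) + 1) * (Real.log s - Real.log t) := by
  have hd2 : t ^ 2 ≤ d ^ 2 * (4 * M ^ 2 + L * t) := by
    rcases le_total (L / 2 * d ^ 2) t with h | h
    · have : (t - L / 2 * d ^ 2) ^ 2 ≤ (2 * M * d) ^ 2 := by
        apply pow_le_pow_left₀ <;> linarith
      nlinarith [sq_nonneg (L * d ^ 2)]
    · have : t * t ≤ L / 2 * d ^ 2 * t := mul_le_mul_of_nonneg_right h ht.le
      have h5 : 0 ≤ d ^ 2 * (4 * M ^ 2) := by positivity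
      have h6 : 0 ≤ L * d ^ 2 * t := by positivity
      nlinarith
  set W := 8 * lam * M ^ 2 + 2 * (lam * L) * t with hW
  have hWpos : 0 < W := by positivity
  set r := t / W with hr
  have hrpos : 0 < r := by positivity
  have hs : t * (1 + r) ≤ s := by
    have : t * r ≤ d ^ 2 / (2 * lam) := by
      rw [hr, ← mul_div_assoc, div_le_div_iff₀ hWpos (by positivity), hW]
      nlinarith
    nlinarith
  have hspos : 0 < s := lt_of_lt_of_le (by positivity) hs
  have hu : 1 - t / s ≥ r / (1 + r) := by
    have : t / s ≤ 1 / (1 + r) := by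
      rw [div_le_div_iff₀ hspos (by positivity)]; linarith
    have e : r / (1 + r) = 1 - 1 / (1 + r) := by field_simp; ring
    rw [e]; linarith
  have hlog : 1 - t / s ≤ Real.log s - Real.log t := by
    rw [← Real.log_div hspos.ne' ht.ne']
    have := Real.one_sub_inv_le_log_of_pos (x := s / t) (by positivity)
    rwa [inv_div] at this
  have e1 : 8 * lam * M ^ 2 * (1 / t - 1 / s) = 8 * lam * M ^ 2 / t * (1 - t / s) := by
    field_simp
  have e2 : 8 * lam * M ^ 2 / t + 2 * (lam * L) = 1 / r := by
    rw [hr, hW]; field_simp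
  rw [e1]
  have hK : 0 ≤ lam * L := by positivity
  have h7 : 2 * (lam * L) * (1 - t / s) ≤ 2 * (lam * L) * (Real.log s - Real.log t) :=
    mul_le_mul_of_nonneg_left hlog (by positivity)
  have h8 : 1 / r * (r / (1 + r)) ≤ 1 / r * (1 - t / s) :=
    mul_le_mul_of_nonneg_left hu (by positivity)
  have e3 : 1 / r * (r / (1 + r)) + r / (1 + r) = 1 := by field_simp
  rw [← e2] at h8 e3
  nlinarith

theorem pot_sum (M L lam : ℝ) (hM : 0 < M) (hL : 0 ≤ L) (hlam : 0 < lam) (n : ℕ)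
    (t d : ℕ → ℝ) (ht : ∀ i ≤ n, 0 < t i)
    (h1 : ∀ i < n, t (i + 1) ≤ t i - d i ^ 2 / (2 * lam))
    (h2 : ∀ i < n, t (i + 1) ≤ 2 * M * d i + L / 2 * d i ^ 2) (hd : ∀ i, 0 ≤ d i) :
    (n : ℝ) ≤ 8 * lam * M ^ 2 * (1 / t n - 1 / t 0)
      + (2 * (lam * L) + 1) * (Real.log (t 0) - Real.log (t n)) := by
  have : ∀ k : ℕ, k ≤ n → (k : ℝ) ≤ 8 * lam * M ^ 2 * (1 / t k - 1 / t 0)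
      + (2 * (lam * L) + 1) * (Real.log (t 0) - Real.log (t k)) := by
    intro k
    induction k with
    | zero => intro _; simp
    | succ k ih =>
      intro hk
      have := pot_step M L lam (t k) (t (k + 1)) (d k) hM hL hlam (ht _ hk) (h1 k hk) (h2 k hk) (hd k)
      have := ih (by omega)
      push_cast
      linarith
  exact this n le_rfl

theorem jung {E : Type*} [NormedAddCommGroup E] [InnerProductSpace ℝ E]
    (m : ℕ) (g : Fin (m + 1) → E) (R : ℝ) (hg : ∀ i j, ‖g i - g j‖ ≤ R) :
    ∃ g0 : E, ∀ i, ‖g i - g0‖ ^ 2 ≤ R ^ 2 / 2 := by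
  let V : (Fin (m + 1) → ℝ) → ℝ := fun w => ∑ i, w i * ‖g i‖ ^ 2 - ‖∑ i, w i • g i‖ ^ 2
  have hcont : Continuous V := by fun_prop
  obtain ⟨w, hw, hmax⟩ := (isCompact_stdSimplex ℝ (Fin (m + 1))).exists_isMaxOn
    ⟨_, single_mem_stdSimplex ℝ 0⟩ hcont.continuousOn
  set b := ∑ i, w i • g i with hb
  have hws : ∑ i, w i = 1 := hw.2
  -- generic identity
  have hid : ∀ a : E, ∑ i, w i * ‖g i - a‖ ^ 2 = V w + ‖b - a‖ ^ 2 := by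
    intro a
    have e1 : ∀ i, w i * ‖g i - a‖ ^ 2
        = w i * ‖g i‖ ^ 2 - 2 * ⟪w i • g i, a⟫ + w i * ‖a‖ ^ 2 := by
      intro i; rw [norm_sub_sq_real, real_inner_smul_left]; ring
    simp_rw [e1]
    rw [Finset.sum_add_distrib, Finset.sum_sub_distrib, ← Finset.sum_mul, hws, ← Finset.mul_sum,
      ← sum_inner, ← hb, norm_sub_sq_real]
    simp only [V, ← hb]
    ring
  have hk : ∀ k, ‖g k - b‖ ^ 2 ≤ V w := by
    intro k
    have key : ∀ s : ℝ, 0 < s → s ≤ 1 → (1 - s) * ‖g k - b‖ ^ 2 ≤ V w := by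
      intro s h0 h1
      have hmem : (1 - s) • w + s • (Pi.single k 1 : Fin (m + 1) → ℝ) ∈ stdSimplex ℝ (Fin (m + 1)) :=
        convex_stdSimplex ℝ _ hw (single_mem_stdSimplex ℝ k) (by linarith) h0.le (by ring)
      have hle := hmax hmem
      simp only [Set.mem_ofPred_eq] at hle
      have e : V ((1 - s) • w + s • (Pi.single k 1 : Fin (m + 1) → ℝ))
          = (1 - s) * V w + s * (1 - s) * ‖g k - b‖ ^ 2 := by
        have e1 : ∑ i, ((1 - s) • w + s • (Pi.single k 1 : Fin (m + 1) → ℝ)) i • g i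
            = (1 - s) • b + s • g k := by
          simp [add_smul, Finset.sum_add_distrib, mul_smul, ← Finset.smul_sum, ← hb, Pi.single_apply]
        have e2 : ∑ i, ((1 - s) • w + s • (Pi.single k 1 : Fin (m + 1) → ℝ)) i * ‖g i‖ ^ 2
            = (1 - s) * (∑ i, w i * ‖g i‖ ^ 2) + s * ‖g k‖ ^ 2 := by
          simp [add_mul, Finset.sum_add_distrib, mul_assoc, ← Finset.mul_sum, Pi.single_apply]
        simp only [V]
        rw [e1, e2, ← hb, norm_add_sq_real, norm_sub_sq_real, norm_smul, norm_smul,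
          real_inner_smul_left, real_inner_smul_right, mul_pow, mul_pow,
          Real.norm_eq_abs, Real.norm_eq_abs, sq_abs, sq_abs, real_inner_comm b (g k)]
        ring
      rw [e] at hle
      have : s * ((1 - s) * ‖g k - b‖ ^ 2) ≤ s * V w := by nlinarith
      exact le_of_mul_le_mul_left this h0
    by_contra hcon
    push Not at hcon
    have hV : 0 ≤ V w := by simpa using key 1 one_pos le_rfl
    set q := ‖g k - b‖ ^ 2
    have hq : 0 < q := lt_of_le_of_lt hV hcon
    have := key ((q - V w) / (2 * q)) (by apply div_pos <;> linarith)
      (by rw [div_le_one (by positivity)]; linarith)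
    have e : (1 - (q - V w) / (2 * q)) * q = (q + V w) / 2 := by field_simp; ring
    rw [e] at this; linarith
  refine ⟨b, fun i => ?_⟩
  have hR0 : 0 ≤ R := le_trans (norm_nonneg _) (hg i i)
  have hsum : ∑ j, w j * ‖g j - g i‖ ^ 2 ≤ ∑ j, w j * R ^ 2 := by
    apply Finset.sum_le_sum
    intro j _
    exact mul_le_mul_of_nonneg_left (pow_le_pow_left₀ (norm_nonneg _) (hg j i) 2) (hw.1 j)
  rw [hid (g i), ← Finset.sum_mul, hws, norm_sub_rev] at hsum
  have := hk i
  linarith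

end UPB

open scoped RealInnerProductSpace

namespace UPB

theorem quad_bound (a b z : ℝ) (hb : 0 < b) : a * z - b * z ^ 2 ≤ a ^ 2 / (4 * b) := by
  rw [le_div_iff₀ (by positivity)]
  nlinarith [sq_nonneg (2 * b * z - a)]

/-- the coefficients in the refined recursion -/
noncomputable def Hs (m : ℕ) : ℝ := ∑ k ∈ Finset.range m, 1 / ((k : ℝ) + 1)

theorem Hs_le (m : ℕ) (hm : 10 ≤ m) : Hs m ≤ 193 / 100 + (m : ℝ) / 10 := by
  induction m, hm using Nat.le_induction with
  | base => norm_num [Hs, Finset.sum_range_succ]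
  | succ k hk ih =>
    have : Hs (k + 1) = Hs k + 1 / ((k : ℝ) + 1) := by rw [Hs, Finset.sum_range_succ]; rfl
    rw [this]
    have hk' : (10 : ℝ) ≤ k := by exact_mod_cast hk
    have : 1 / ((k : ℝ) + 1) ≤ 1 / 10 := one_div_le_one_div_of_le (by norm_num) (by linarith)
    push_cast; linarith

theorem jung_rec (lam ω ρ : ℝ) (hlam : 0 < lam) (hω : 0 < ω) (hω1 : ω ≤ 1) (hρ : 0 ≤ ρ) (n : ℕ)
    (t d P F : ℕ → ℝ)
    (hF : ∀ i ≤ n, |F i| ≤ ρ * P i)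
    (h0 : t 0 ≤ F 0 + ρ * P 0 - ω / (2 * lam) * P 0 ^ 2)
    (h1 : ∀ i < n, t (i + 1) ≤ t i - d i ^ 2 / (2 * lam))
    (h2 : ∀ i < n, t (i + 1) ≤ F (i + 1) - F i + ρ * d i - ω / (2 * lam) * P (i + 1) ^ 2) :
    ∀ i ≤ n, ((i : ℝ) + 1) * (i + 2) / 2 * t i - (i + 2) * F i
      ≤ ρ ^ 2 * lam / ω * (2 + i + 3 / 2 * Hs i) := by
  intro i
  induction i with
  | zero =>
    intro _
    have hF0 := (abs_le.mp (hF 0 (Nat.zero_le _))).1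
    have := quad_bound (2 * ρ) (ω / (2 * lam)) (P 0) (by positivity)
    have e : (2 * ρ) ^ 2 / (4 * (ω / (2 * lam))) = ρ ^ 2 * lam / ω * 2 := by field_simp; ring
    simp [Hs]
    rw [e] at this
    linarith
  | succ i ih =>
    intro hi
    have ih' := ih (by omega)
    have a1 := h1 i hi
    have a2 := h2 i hi
    have aF := (abs_le.mp (hF (i + 1) hi)).1
    have hH : Hs (i + 1) = Hs i + 1 / ((i : ℝ) + 1) := by rw [Hs, Finset.sum_range_succ]; rfl
    have hi0 : (0 : ℝ) ≤ i := Nat.cast_nonneg i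
    push_cast
    rw [hH]
    generalize (i : ℝ) = I at *
    have b1 := quad_bound ((I + 2) * ρ) ((I + 1) * (I + 2) / 2 / (2 * lam)) (d i) (by positivity)
    have e1 : ((I + 2) * ρ) ^ 2 / (4 * ((I + 1) * (I + 2) / 2 / (2 * lam)))
        = ρ ^ 2 * lam * (1 + 1 / (I + 1)) := by field_simp; ring
    have b2 := quad_bound ρ ((I + 2) * (ω / (2 * lam))) (P (i + 1)) (by positivity)
    have e2 : ρ ^ 2 / (4 * ((I + 2) * (ω / (2 * lam)))) = ρ ^ 2 * lam / ω * (1 / (2 * (I + 2))) := by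
      field_simp; ring
    rw [e1] at b1
    rw [e2] at b2
    have c1 : ρ ^ 2 * lam * (1 + 1 / (I + 1)) ≤ ρ ^ 2 * lam / ω * (1 + 1 / (I + 1)) := by
      apply mul_le_mul_of_nonneg_right _ (by positivity)
      rw [le_div_iff₀ hω]
      have : 0 ≤ ρ ^ 2 * lam := by positivity
      nlinarith
    have c2 : ρ ^ 2 * lam / ω * (1 / (2 * (I + 2))) ≤ ρ ^ 2 * lam / ω * (1 / 2 * (1 / (I + 1))) := by
      apply mul_le_mul_of_nonneg_left _ (by positivity)
      rw [one_div_mul_one_div]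
      exact one_div_le_one_div_of_le (by positivity) (by linarith)
    have d1 : (I + 1) * (I + 2) / 2 * t (i + 1) ≤ (I + 1) * (I + 2) / 2 * (t i - d i ^ 2 / (2 * lam)) :=
      mul_le_mul_of_nonneg_left a1 (by positivity)
    have d2 : (I + 2) * t (i + 1) ≤ (I + 2) * (F (i + 1) - F i + ρ * d i - ω / (2 * lam) * P (i + 1) ^ 2) :=
      mul_le_mul_of_nonneg_left a2 (by positivity)
    have e3 : (I + 1) * (I + 2) / 2 * (t i - d i ^ 2 / (2 * lam)) =
      (I + 1) * (I + 2) / 2 * t i - (I + 1) * (I + 2) / 2 / (2 * lam) * d i ^ 2 := by ring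
    rw [e3] at d1
    have hfin : (I + 1 + 1) * (I + 1 + 2) / 2 * t (i + 1) - (I + 1 + 2) * F (i + 1)
      ≤ ρ ^ 2 * lam / ω * (2 + I + 3 / 2 * Hs i) + ρ ^ 2 * lam / ω * (1 + 1 / (I + 1))
        + ρ ^ 2 * lam / ω * (1 / 2 * (1 / (I + 1))) := by
      have e4 : (I + 1 + 1) * (I + 1 + 2) / 2 * t (i + 1)
        = (I + 1) * (I + 2) / 2 * t (i + 1) + (I + 2) * t (i + 1) := by ring
      rw [e4]
      nlinarith
    have e5 : ρ ^ 2 * lam / ω * (2 + (I + 1) + 3 / 2 * (Hs i + 1 / (I + 1)))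
      = ρ ^ 2 * lam / ω * (2 + I + 3 / 2 * Hs i) + ρ ^ 2 * lam / ω * (1 + 1 / (I + 1))
        + ρ ^ 2 * lam / ω * (1 / 2 * (1 / (I + 1))) := by ring
    rw [e5]
    exact hfin

theorem jung_final (lam ω ρ : ℝ) (hlam : 0 < lam) (hω : 0 < ω) (hω1 : ω ≤ 1) (hρ : 0 ≤ ρ) (n : ℕ)
    (hn : 40 ≤ n)
    (t d P F : ℕ → ℝ)
    (hF : ∀ i ≤ n, |F i| ≤ ρ * P i)
    (h0 : t 0 ≤ F 0 + ρ * P 0 - ω / (2 * lam) * P 0 ^ 2)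
    (h1 : ∀ i < n, t (i + 1) ≤ t i - d i ^ 2 / (2 * lam))
    (h2 : ∀ i < n, t (i + 1) ≤ F (i + 1) - F i + ρ * d i - ω / (2 * lam) * P (i + 1) ^ 2) :
    t n ≤ ρ ^ 2 * lam / ω * (17 / 5) / ((n : ℝ) + 1) := by
  obtain ⟨i, rfl⟩ : ∃ i, n = i + 1 := ⟨n - 1, by omega⟩
  have hrec := jung_rec lam ω ρ hlam hω hω1 hρ (i + 1) t d P F hF h0 h1 h2 i (by omega)
  have hH := Hs_le (i + 1) (by omega)
  have hHe : Hs (i + 1) = Hs i + 1 / ((i : ℝ) + 1) := by rw [Hs, Finset.sum_range_succ]; rfl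
  have a1 := h1 i (by omega)
  have a2 := h2 i (by omega)
  have aF := (abs_le.mp (hF (i + 1) le_rfl)).2
  have hi0 : (39 : ℝ) ≤ i := by exact_mod_cast (by omega : 39 ≤ i)
  push_cast at *
  generalize (i : ℝ) = I at *
  have b1 := quad_bound ((I + 2) * ρ) ((I + 1) * (I + 2) / 2 / (2 * lam)) (d i) (by positivity)
  have e1 : ((I + 2) * ρ) ^ 2 / (4 * ((I + 1) * (I + 2) / 2 / (2 * lam)))
      = ρ ^ 2 * lam * (1 + 1 / (I + 1)) := by field_simp; ring
  have b2 := quad_bound ρ (ω / (2 * lam)) (P (i + 1)) (by positivity)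
  have e2 : ρ ^ 2 / (4 * (ω / (2 * lam))) = ρ ^ 2 * lam / ω * (1 / 2) := by
    field_simp; ring
  rw [e1] at b1
  rw [e2] at b2
  have c1 : ρ ^ 2 * lam * (1 + 1 / (I + 1)) ≤ ρ ^ 2 * lam / ω * (1 + 1 / (I + 1)) := by
    apply mul_le_mul_of_nonneg_right _ (by positivity)
    rw [le_div_iff₀ hω]
    have : 0 ≤ ρ ^ 2 * lam := by positivity
    nlinarith
  have d1 : (I + 1) * (I + 2) / 2 * t (i + 1) ≤ (I + 1) * (I + 2) / 2 * (t i - d i ^ 2 / (2 * lam)) :=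
    mul_le_mul_of_nonneg_left a1 (by positivity)
  have d2 : (I + 2) * t (i + 1) ≤ (I + 2) * (F (i + 1) - F i + ρ * d i - ω / (2 * lam) * P (i + 1) ^ 2) :=
    mul_le_mul_of_nonneg_left a2 (by positivity)
  have e3 : (I + 1) * (I + 2) / 2 * (t i - d i ^ 2 / (2 * lam)) =
    (I + 1) * (I + 2) / 2 * t i - (I + 1) * (I + 2) / 2 / (2 * lam) * d i ^ 2 := by ring
  rw [e3] at d1
  have b3 : (I + 2) * (F (i + 1) - ω / (2 * lam) * P (i + 1) ^ 2) ≤ (I + 2) * (ρ ^ 2 * lam / ω * (1 / 2)) :=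
    mul_le_mul_of_nonneg_left (by linarith) (by positivity)
  have hfin : (I + 2) * (I + 3) / 2 * t (i + 1)
    ≤ ρ ^ 2 * lam / ω * (2 + I + 3 / 2 * Hs i) + ρ ^ 2 * lam / ω * (1 + 1 / (I + 1))
      + (I + 2) * (ρ ^ 2 * lam / ω * (1 / 2)) := by
    have e4 : (I + 2) * (I + 3) / 2 * t (i + 1)
      = (I + 1) * (I + 2) / 2 * t (i + 1) + (I + 2) * t (i + 1) := by ring
    rw [e4]
    nlinarith
  have hκ : 0 ≤ ρ ^ 2 * lam / ω := by positivity
  generalize ρ ^ 2 * lam / ω = κ at *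
  have hposI : 0 ≤ 1 / (I + 1) := by positivity
  have hcoef : (2 + I + 3 / 2 * Hs i) + (1 + 1 / (I + 1)) + (I + 2) * (1 / 2) ≤ 17 / 10 * (I + 3) := by
    linarith
  have hfin2 : (I + 2) * (I + 3) / 2 * t (i + 1) ≤ κ * (17 / 10 * (I + 3)) := by
    have h3 := mul_le_mul_of_nonneg_left hcoef hκ
    have h4 : κ * ((2 + I + 3 / 2 * Hs i) + (1 + 1 / (I + 1)) + (I + 2) * (1 / 2))
      = κ * (2 + I + 3 / 2 * Hs i) + κ * (1 + 1 / (I + 1)) + (I + 2) * (κ * (1 / 2)) := by ring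
    rw [h4] at h3
    exact hfin.trans h3
  rw [le_div_iff₀ (by positivity)]
  have : (I + 3) * (t (i + 1) * (I + 1 + 1)) ≤ (I + 3) * (κ * (17 / 5)) := by
    have e5 : (I + 3) * (t (i + 1) * (I + 1 + 1)) = 2 * ((I + 2) * (I + 3) / 2 * t (i + 1)) := by ring
    have e6 : (I + 3) * (κ * (17 / 5)) = 2 * (κ * (17 / 10 * (I + 3))) := by ring
    rw [e5, e6]; linarith
  exact le_of_mul_le_mul_left this (by positivity)

end UPB

open scoped RealInnerProductSpace

namespace UPB

theorem exp_three_gt : (20 : ℝ) < Real.exp 3 := by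
  have h := Real.exp_one_gt_d9
  have : Real.exp 3 = Real.exp 1 ^ 3 := by rw [← Real.exp_nat_mul]; norm_num
  rw [this]
  have h2 : (2.718 : ℝ) ^ 3 ≤ Real.exp 1 ^ 3 := pow_le_pow_left₀ (by norm_num) (by linarith) 3
  refine lt_of_lt_of_le ?_ h2
  norm_num

theorem log_lt_three (r : ℝ) (h0 : 0 < r) (h : r ≤ 20) : Real.log r < 3 := by
  rw [Real.log_lt_iff_lt_exp h0]
  exact lt_of_le_of_lt h exp_three_gt

theorem caseA (N B K ω Λ T t0 : ℝ) (hN : 1 ≤ N) (hω : 0 < ω) (hω1 : ω ≤ 1) (hK0 : 0 ≤ K)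
    (hK : K ≤ ω / 2) (hΛ : 0 < Λ) (hT : 0 < T) (htT : T < t0)
    (hcase : 16 ≤ B ∨ (8 ≤ B ∧ N ≤ 40))
    (hyp : Λ * B + 2 * T * (K / ω) * B ≤ ω * N * T)
    (ht0 : t0 * (ω - K) ≤ 2 * Λ)
    (hpot : N - 1 ≤ 8 * Λ * (1 / T - 1 / t0) + (2 * K + 1) * Real.log (t0 / T)) : False := by
  have hB : 0 < B := by rcases hcase with h | h <;> linarith
  have ht0p : 0 < t0 := hT.trans htT
  obtain ⟨k, hk⟩ : ∃ k, k = K / ω := ⟨_, rfl⟩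
  rw [← hk] at hyp
  have hkK : K ≤ k := by rw [hk, le_div_iff₀ hω]; nlinarith
  obtain ⟨X, hX⟩ : ∃ X, X = N / B := ⟨_, rfl⟩
  have hXN : N = X * B := by rw [hX]; field_simp
  have hXp : 0 < X := by rw [hX]; positivity
  obtain ⟨a, ha⟩ : ∃ a, a = Λ / T := ⟨_, rfl⟩
  have haΛ : Λ = a * T := by rw [ha]; field_simp
  obtain ⟨r, hr⟩ : ∃ r, r = t0 / T := ⟨_, rfl⟩
  have hrt : t0 = r * T := by rw [hr]; field_simp
  have hr1 : 1 < r := by rw [hr, lt_div_iff₀ hT]; linarith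
  have haX : a ≤ ω * X - 2 * k := by
    have : (T * B) * a ≤ (T * B) * (ω * X - 2 * k) := by
      rw [haΛ, hXN] at hyp; nlinarith
    exact le_of_mul_le_mul_left this (by positivity)
  have hra : r * (ω - K) ≤ 2 * a := by
    have : T * (r * (ω - K)) ≤ T * (2 * a) := by
      rw [haΛ, hrt] at ht0; nlinarith
    exact le_of_mul_le_mul_left this hT
  have hr4 : r ≤ 4 * X := by
    have : ω * r ≤ ω * (4 * X) := by nlinarith
    exact le_of_mul_le_mul_left this hω
  have h8 : 4 * (ω - K) ≤ 8 * Λ / t0 := by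
    rw [le_div_iff₀ ht0p]; nlinarith
  have e : 8 * Λ * (1 / T - 1 / t0) = 8 * a - 8 * Λ / t0 := by rw [ha]; field_simp
  rw [e, ← hr] at hpot
  have hlog0 : 0 < Real.log r := Real.log_pos hr1
  have main : N - 1 ≤ 8 * (ω * X) - 16 * k - 4 * (ω - K) + (2 * K + 1) * Real.log r := by linarith
  rcases hcase with h16 | ⟨h8B, h40⟩
  · have hl : Real.log r ≤ 4 * X - 1 :=
      (Real.log_le_sub_one_of_pos (by linarith)).trans (by linarith)
    have h2 : (2 * K + 1) * Real.log r ≤ 2 * Real.log r :=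
      mul_le_mul_of_nonneg_right (by linarith) hlog0.le
    have h3 : ω * X ≤ X := mul_le_of_le_one_left hXp.le hω1
    have h4 : 16 * X ≤ N := by
      have := mul_le_mul_of_nonneg_left h16 hXp.le
      linarith
    linarith
  · have hXN8 : 8 * X ≤ N := by
      have := mul_le_mul_of_nonneg_left h8B hXp.le
      linarith
    have hl3 : Real.log r < 3 := log_lt_three r (by linarith) (by linarith)
    have hl1 : Real.log r ≤ N / 2 - 1 :=
      (Real.log_le_sub_one_of_pos (by linarith)).trans (by linarith)
    have h5 : 8 * (ω * X) ≤ ω * N := by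
      have := mul_le_mul_of_nonneg_left hXN8 hω.le
      linarith
    have h6 : 2 * K * Real.log r ≤ 2 * K * 3 := mul_le_mul_of_nonneg_left hl3.le (by linarith)
    have h7 : (1 - ω) * Real.log r ≤ (1 - ω) * (N / 2 - 1) :=
      mul_le_mul_of_nonneg_left hl1 (by linarith)
    have h9 : ω * Real.log r < ω * 3 := mul_lt_mul_of_pos_left hl3 hω
    have h10 : 0 ≤ (1 - ω) * N := mul_nonneg (by linarith) (by linarith)
    linarith

theorem caseB (N B K ω Λ T t0 s y : ℝ) (hN : 1 ≤ N) (hω : 0 < ω) (hω1 : ω ≤ 1)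
    (hK : ω / 2 < K) (hΛ : 0 < Λ) (hT : 0 < T) (htT : T < t0) (hy0 : 0 ≤ y) (hs0 : 0 ≤ s)
    (hsy : s ^ 2 = y * N)
    (hB8 : B = 8 + 12 * Real.log (1 + y))
    (hcase : 16 ≤ B ∨ (8 ≤ B ∧ N ≤ 40 ∧ y ≤ 1))
    (hyp : Λ * B + 2 * T * (K / ω) * B ≤ ω * N * T)
    (ht0 : t0 * K * N ≤ Λ * (8 * s + 8 * y))
    (hpot : N - 1 ≤ 8 * Λ * (1 / T - 1 / t0) + (2 * K + 1) * Real.log (t0 / T)) : False := by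
  have hB : 0 < B := by rcases hcase with h | h <;> linarith
  have ht0p : 0 < t0 := hT.trans htT
  obtain ⟨k, hk⟩ : ∃ k, k = K / ω := ⟨_, rfl⟩
  rw [← hk] at hyp
  have hkω : K = k * ω := by rw [hk]; field_simp
  have hk2 : 1 / 2 < k := by rw [hk, lt_div_iff₀ hω]; linarith
  have hkK : K ≤ k := by rw [hkω]; nlinarith
  obtain ⟨X, hX⟩ : ∃ X, X = N / B := ⟨_, rfl⟩
  have hXN : N = X * B := by rw [hX]; field_simp
  have hXp : 0 < X := by rw [hX]; positivity
  obtain ⟨a, ha⟩ : ∃ a, a = Λ / T := ⟨_, rfl⟩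
  have haΛ : Λ = a * T := by rw [ha]; field_simp
  have hap : 0 < a := by rw [ha]; positivity
  obtain ⟨r, hr⟩ : ∃ r, r = t0 / T := ⟨_, rfl⟩
  have hrt : t0 = r * T := by rw [hr]; field_simp
  have hr1 : 1 < r := by rw [hr, lt_div_iff₀ hT]; linarith
  have haX : a ≤ ω * X - 2 * k := by
    have : (T * B) * a ≤ (T * B) * (ω * X - 2 * k) := by
      rw [haΛ, hXN] at hyp; nlinarith
    exact le_of_mul_le_mul_left this (by positivity)
  have hr8 : r * k * B ≤ 8 * s + 8 * y := by
    have h1 : T * (r * K * N) ≤ T * (a * (8 * s + 8 * y)) := by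
      rw [haΛ, hrt] at ht0; nlinarith
    have h2 := le_of_mul_le_mul_left h1 hT
    have h3 : a * (8 * s + 8 * y) ≤ ω * X * (8 * s + 8 * y) :=
      mul_le_mul_of_nonneg_right (by linarith) (by positivity)
    have h4 : (ω * X) * (r * k * B) ≤ (ω * X) * (8 * s + 8 * y) := by
      calc (ω * X) * (r * k * B) = r * K * N := by rw [hkω, hXN]; ring
        _ ≤ _ := h2.trans h3
    exact le_of_mul_le_mul_left h4 (by positivity)
  have h8 : 0 ≤ 8 * Λ / t0 := by positivity
  have e : 8 * Λ * (1 / T - 1 / t0) = 8 * a - 8 * Λ / t0 := by rw [ha]; field_simp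
  rw [e, ← hr] at hpot
  have hlog0 : 0 < Real.log r := Real.log_pos hr1
  have h4k : (2 * K + 1) * Real.log r ≤ 4 * k * Real.log r :=
    mul_le_mul_of_nonneg_right (by linarith) hlog0.le
  have main : N - 1 + 16 * k ≤ 8 * (ω * X) + 4 * k * Real.log r := by linarith
  have hωX : ω * X ≤ X := mul_le_of_le_one_left hXp.le hω1
  rcases hcase with h16 | ⟨h8B, h40, hy1⟩
  · have h16X : 16 * X ≤ N := by
      have := mul_le_mul_of_nonneg_left h16 hXp.le
      linarith
    have h2kX : 2 * k ≤ X := by linarith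
    obtain ⟨Z, hZ⟩ : ∃ Z, Z = N / k := ⟨_, rfl⟩
    have hkp : 0 < k := by linarith
    have hZN : N = k * Z := by rw [hZ]; field_simp
    have hZB : 2 * B ≤ Z := by
      have : k * (2 * B) ≤ k * Z := by
        have := mul_le_mul_of_nonneg_right h2kX hB.le
        linarith
      exact le_of_mul_le_mul_left this hkp
    have hmain2 : Z / 2 + 14 ≤ 4 * Real.log r := by
      have : k * (Z / 2 + 14) ≤ k * (4 * Real.log r) := by
        linarith
      exact le_of_mul_le_mul_left this hkp
    have hsk : s ≤ k * (y + Z / 2) := by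
      have hZ0 : 0 ≤ Z := by linarith
      have h0 : 0 ≤ k * (y + Z / 2) := by positivity
      refine (sq_le_sq₀ hs0 h0).mp ?_
      rw [hsy, hZN]
      have h1 : 0 ≤ k * ((y * Z) * (k - 1 / 2)) := by
        apply mul_nonneg hkp.le (mul_nonneg (by positivity) (by linarith))
      have h2 : 0 ≤ k ^ 2 * (y - Z / 2) ^ 2 := by positivity
      have e1 : (k * (y + Z / 2)) ^ 2 = k ^ 2 * (y - Z / 2) ^ 2 + 2 * (k * ((y * Z) * (k - 1 / 2)))
        + k * (y * Z) := by ring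
      rw [e1]
      linarith
    have hr2 : r ≤ (1 + y) * (1 + Z / 4) := by
      have h3 : r * k * 16 ≤ r * k * B := mul_le_mul_of_nonneg_left h16 (by positivity)
      have h4 : 1 / 2 * y ≤ k * y := mul_le_mul_of_nonneg_right hk2.le hy0
      have h1 : k * (16 * r) ≤ k * (8 * (y + Z / 2) + 16 * y) := by linarith
      have h2 := le_of_mul_le_mul_left h1 hkp
      have h5 : 0 ≤ y * (Z - 32) := mul_nonneg hy0 (by linarith)
      linarith
    have hZ0 : 0 ≤ Z := by linarith
    have hl : Real.log r ≤ Real.log (1 + y) + Real.log (1 + Z / 4) := by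
      rw [← Real.log_mul (by positivity) (by positivity)]
      exact Real.log_le_log (by linarith) hr2
    have hl2 : Real.log (1 + Z / 4) ≤ Z / 16 + 7 / 4 := by
      have h1 : (1 + Z / 4) = 4 * ((1 + Z / 4) / 4) := by ring
      rw [h1, Real.log_mul (by norm_num) (by positivity)]
      have h2 := Real.log_le_sub_one_of_pos (show 0 < (1 + Z / 4) / 4 by positivity)
      have h3 : Real.log 4 < 2 := by
        have : (4 : ℝ) = 2 ^ 2 := by norm_num
        rw [this, Real.log_pow]
        have := Real.log_two_lt_d9
        push_cast; linarith
      linarith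
    linarith
  · have hs : s ≤ 7 := by
      by_contra! h
      have h1 : y * N ≤ 1 * 40 := mul_le_mul hy1 h40 (by linarith) (by norm_num)
      have h2 : (7 : ℝ) ^ 2 < s ^ 2 := by gcongr
      linarith
    have hr20 : r ≤ 20 := by
      have h1 : r * k * 8 ≤ r * k * B := mul_le_mul_of_nonneg_left h8B (by
        apply mul_nonneg <;> linarith)
      have h2 : r * (1 / 2) ≤ r * k := mul_le_mul_of_nonneg_left hk2.le (by linarith)
      linarith
    have hl3 : Real.log r < 3 := log_lt_three r (by linarith) hr20
    have h8X : 8 * X ≤ N := by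
      have := mul_le_mul_of_nonneg_left h8B hXp.le
      linarith
    have : 4 * k * Real.log r ≤ 4 * k * 3 := mul_le_mul_of_nonneg_left hl3.le (by linarith)
    linarith

theorem cycle1 {E : Type*} [NormedAddCommGroup E] [InnerProductSpace ℝ E]
    (S : Set E) (f : E → ℝ) (g : E → E) (M L D : ℝ)
    (hM : 0 < M) (hL : 0 ≤ L) (hD : 0 < D)
    (hsub : ∀ x ∈ S, ∀ u ∈ S, f x + ⟪g x, u - x⟫ ≤ f u)
    (hyb : ∀ x ∈ S, ∀ y ∈ S, ‖g x - g y‖ ≤ 2 * M + L * ‖x - y‖)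
    (hdiam : ∀ a ∈ S, ∀ b ∈ S, ‖a - b‖ ≤ D)
    (lam ω : ℝ) (hlam : 0 < lam) (hω : 0 < ω) (hω1 : ω ≤ 1)
    (n : ℕ) (hn : 40 ≤ n) (c : E) (hc : c ∈ S) (x : ℕ → E) (hx : ∀ i, x i ∈ S) (t : ℕ → ℝ)
    (h0 : t 0 ≤ f (x 0) - f c - ⟪g c, x 0 - c⟫ - ω / (2 * lam) * ‖x 0 - c‖ ^ 2)
    (h1 : ∀ i < n, t (i + 1) ≤ t i - ‖x (i + 1) - x i‖ ^ 2 / (2 * lam))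
    (h2 : ∀ i < n, t (i + 1) ≤ f (x (i + 1)) - f (x i) - ⟪g (x i), x (i + 1) - x i⟫
      - ω / (2 * lam) * ‖x (i + 1) - c‖ ^ 2) :
    t n ≤ (2 * M + L * D) ^ 2 / 2 * lam / ω * (17 / 5) / ((n : ℝ) + 1) := by
  let pt : ℕ → E := fun k => if k = 0 then c else x (k - 1)
  have hpt : ∀ k, pt k ∈ S := by
    intro k; simp only [pt]; split_ifs
    · exact hc
    · exact hx _
  obtain ⟨g0, hg0⟩ := jung (n + 1) (fun i => g (pt i)) (2 * M + L * D) (by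
    intro i j
    refine (hyb _ (hpt i) _ (hpt j)).trans ?_
    have := mul_le_mul_of_nonneg_left (hdiam _ (hpt i) _ (hpt j)) hL
    linarith)
  set ρ := Real.sqrt ((2 * M + L * D) ^ 2 / 2) with hρ
  have hρ2 : ρ ^ 2 = (2 * M + L * D) ^ 2 / 2 := Real.sq_sqrt (by positivity)
  have hρ0 : 0 ≤ ρ := Real.sqrt_nonneg _
  have hgc : ‖g c - g0‖ ≤ ρ := by
    apply Real.le_sqrt_of_sq_le
    have := hg0 0
    simpa [pt] using this
  have hgx : ∀ i ≤ n, ‖g (x i) - g0‖ ≤ ρ := by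
    intro i hi
    apply Real.le_sqrt_of_sq_le
    have := hg0 ⟨i + 1, by omega⟩
    simpa [pt] using this
  have inn : ∀ a v : E, ‖a - g0‖ ≤ ρ → |⟪a, v⟫ - ⟪g0, v⟫| ≤ ρ * ‖v‖ := by
    intro a v ha
    rw [← inner_sub_left]
    exact (abs_real_inner_le_norm _ _).trans (mul_le_mul_of_nonneg_right ha (norm_nonneg _))
  rw [← hρ2]
  refine jung_final lam ω ρ hlam hω hω1 hρ0 n hn t (fun i => ‖x (i + 1) - x i‖)
    (fun i => ‖x i - c‖) (fun i => f (x i) - f c - ⟪g0, x i - c⟫) ?_ ?_ h1 ?_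
  · intro i hi
    have a1 := abs_le.mp (inn (g c) (x i - c) hgc)
    have a2 := abs_le.mp (inn (g (x i)) (x i - c) (hgx i hi))
    have b1 := hsub c hc (x i) (hx i)
    have b2 := hsub (x i) (hx i) c hc
    rw [← neg_sub (x i) c, inner_neg_right] at b2
    rw [abs_le]
    constructor <;> linarith [a1.1, a2.2]
  · have a1 := abs_le.mp (inn (g c) (x 0 - c) hgc)
    show t 0 ≤ (f (x 0) - f c - ⟪g0, x 0 - c⟫) + ρ * ‖x 0 - c‖ - ω / (2 * lam) * ‖x 0 - c‖ ^ 2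
    linarith [a1.1]
  · intro i hi
    have a1 := abs_le.mp (inn (g (x i)) (x (i + 1) - x i) (hgx i (by omega)))
    have := h2 i hi
    have e : ⟪g0, x (i + 1) - x i⟫ = ⟪g0, x (i + 1) - c⟫ - ⟪g0, x i - c⟫ := by
      rw [← inner_sub_right]; congr 1; abel
    show t (i + 1) ≤ (f (x (i + 1)) - f c - ⟪g0, x (i + 1) - c⟫) - (f (x i) - f c - ⟪g0, x i - c⟫)
      + ρ * ‖x (i + 1) - x i‖ - ω / (2 * lam) * ‖x (i + 1) - c‖ ^ 2
    linarith [a1.1]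

theorem cycle_bound {E : Type*} [NormedAddCommGroup E] [InnerProductSpace ℝ E]
    (S : Set E) (hS : Convex ℝ S) (f : E → ℝ) (g : E → E) (M L D : ℝ)
    (hM : 0 < M) (hL : 0 ≤ L) (hD : 0 < D)
    (hsub : ∀ x ∈ S, ∀ u ∈ S, f x + ⟪g x, u - x⟫ ≤ f u)
    (hyb : ∀ x ∈ S, ∀ y ∈ S, ‖g x - g y‖ ≤ 2 * M + L * ‖x - y‖)
    (hdiam : ∀ a ∈ S, ∀ b ∈ S, ‖a - b‖ ≤ D)
    (lam ω T : ℝ) (hlam : 0 < lam) (hω : 0 < ω) (hω1 : ω ≤ 1) (hT : 0 < T)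
    (n : ℕ) (c : E) (hc : c ∈ S) (x : ℕ → E) (hx : ∀ i, x i ∈ S) (t : ℕ → ℝ)
    (h0 : t 0 ≤ f (x 0) - f c - ⟪g c, x 0 - c⟫ - ω / (2 * lam) * ‖x 0 - c‖ ^ 2)
    (h1 : ∀ i < n, t (i + 1) ≤ t i - ‖x (i + 1) - x i‖ ^ 2 / (2 * lam))
    (h2 : ∀ i < n, t (i + 1) ≤ f (x (i + 1)) - f (x i) - ⟪g (x i), x (i + 1) - x i⟫
      - ω / (2 * lam) * ‖x (i + 1) - c‖ ^ 2)
    (B : ℝ) (hB : B = 8 + 12 * Real.log (1 + L ^ 2 * D ^ 2 * ((n : ℝ) + 1) / (16 * M ^ 2)))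
    (hyp : lam * M ^ 2 * B + 2 * T * (lam * L / ω) * B ≤ ω * ((n : ℝ) + 1) * T) : t n ≤ T := by
  obtain ⟨y, hy⟩ : ∃ y, y = L ^ 2 * D ^ 2 * ((n : ℝ) + 1) / (16 * M ^ 2) := ⟨_, rfl⟩
  have hy0 : 0 ≤ y := by rw [hy]; positivity
  rw [← hy] at hB
  have hlog0 : 0 ≤ Real.log (1 + y) := Real.log_nonneg (by linarith)
  have hB8 : 8 ≤ B := by linarith
  have hn0 : (0 : ℝ) ≤ n := Nat.cast_nonneg n
  by_cases hreg : y < 1 ∧ 40 ≤ n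
  · obtain ⟨hy1, hn⟩ := hreg
    refine (cycle1 S f g M L D hM hL hD hsub hyb hdiam lam ω hlam hω hω1 n hn c hc x hx t
      h0 h1 h2).trans ?_
    have hn' : (40 : ℝ) ≤ n := by exact_mod_cast hn
    rw [div_le_iff₀ (by positivity)]
    have hlog : y / 2 ≤ Real.log (1 + y) := by
      refine le_trans ?_ (Real.one_sub_inv_le_log_of_pos (by linarith))
      have : 1 - (1 + y)⁻¹ = y / (1 + y) := by field_simp; ring
      rw [this]
      exact div_le_div_of_nonneg_left hy0 (by linarith) (by linarith)
    have hq : M ^ 2 * (6 * y) = 6 / 16 * ((L * D) ^ 2 * ((n : ℝ) + 1)) := by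
      rw [hy]; field_simp
    have hq2 : (L * D) ^ 2 * 41 ≤ (L * D) ^ 2 * ((n : ℝ) + 1) :=
      mul_le_mul_of_nonneg_left (by linarith) (by positivity)
    have hMB : M ^ 2 * (8 + 6 * y) ≤ M ^ 2 * B :=
      mul_le_mul_of_nonneg_left (by linarith) (by positivity)
    have hkey : (2 * M + L * D) ^ 2 / 2 * (17 / 5) ≤ M ^ 2 * B := by
      nlinarith [sq_nonneg (2 * M - 5 * (L * D))]
    have h5 : lam * ((2 * M + L * D) ^ 2 / 2 * (17 / 5)) ≤ lam * (M ^ 2 * B) :=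
      mul_le_mul_of_nonneg_left hkey hlam.le
    have h6 : 0 ≤ 2 * T * (lam * L / ω) * B := by positivity
    have e : (2 * M + L * D) ^ 2 / 2 * lam / ω * (17 / 5)
      = lam * ((2 * M + L * D) ^ 2 / 2 * (17 / 5)) / ω := by ring
    rw [e, div_le_iff₀ hω]
    linarith
  · by_contra! hcon
    have hmono : ∀ i, i ≤ n → t n ≤ t i := by
      intro i hi
      induction hi using Nat.decreasingInduction with
      | self => exact le_rfl
      | of_succ k hk ih =>
        have := h1 k hk
        have : 0 ≤ ‖x (k + 1) - x k‖ ^ 2 / (2 * lam) := by positivity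
        linarith
    have htpos : ∀ i ≤ n, 0 < t i := fun i hi => by linarith [hmono i hi]
    have htT : T < t 0 := by linarith [hmono 0 (Nat.zero_le _)]
    have hpot := pot_sum M L lam hM hL hlam n t (fun i => ‖x (i + 1) - x i‖) htpos h1
      (fun i hi => by
        have a := descent S hS f g M L hL hsub hyb (x i) (x (i + 1)) (hx _) (hx _)
        have b := h2 i hi
        have : 0 ≤ ω / (2 * lam) * ‖x (i + 1) - c‖ ^ 2 := by positivity
        show t (i + 1) ≤ 2 * M * ‖x (i + 1) - x i‖ + L / 2 * ‖x (i + 1) - x i‖ ^ 2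
        linarith) (fun i => norm_nonneg _)
    have hpot2 : ((n : ℝ) + 1) - 1 ≤ 8 * (lam * M ^ 2) * (1 / T - 1 / t 0)
        + (2 * (lam * L) + 1) * Real.log (t 0 / T) := by
      rw [Real.log_div (by linarith) hT.ne']
      have a1 : 1 / t n ≤ 1 / T := one_div_le_one_div_of_le hT hcon.le
      have a2 : Real.log T ≤ Real.log (t n) := Real.log_le_log hT hcon.le
      have b1 : 8 * lam * M ^ 2 * (1 / t n - 1 / t 0) ≤ 8 * lam * M ^ 2 * (1 / T - 1 / t 0) :=
        mul_le_mul_of_nonneg_left (by linarith) (by positivity)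
      have b2 : (2 * (lam * L) + 1) * (Real.log (t 0) - Real.log (t n))
          ≤ (2 * (lam * L) + 1) * (Real.log (t 0) - Real.log T) :=
        mul_le_mul_of_nonneg_left (by linarith) (by positivity)
      linarith
    have hd0 := descent S hS f g M L hL hsub hyb c (x 0) hc (hx _)
    obtain ⟨δ, hδ⟩ : ∃ δ, δ = ‖x 0 - c‖ := ⟨_, rfl⟩
    have hδ0 : 0 ≤ δ := by rw [hδ]; positivity
    have hδD : δ ≤ D := by rw [hδ]; exact hdiam _ (hx 0) _ hc
    rw [← hδ] at hd0 h0
    have ht0 : t 0 ≤ 2 * M * δ + L / 2 * δ ^ 2 - ω / (2 * lam) * δ ^ 2 := by linarith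
    have hlog2 : 1 ≤ y → 16 ≤ B := by
      intro h
      have : Real.log 2 ≤ Real.log (1 + y) := Real.log_le_log (by norm_num) (by linarith)
      have := Real.log_two_gt_d9
      linarith
    have hcase : 16 ≤ B ∨ (8 ≤ B ∧ (n : ℝ) + 1 ≤ 40 ∧ y ≤ 1) := by
      by_cases h : 1 ≤ y
      · exact Or.inl (hlog2 h)
      · right
        refine ⟨hB8, ?_, by linarith⟩
        have : n + 1 ≤ 40 := by
          by_contra h'
          exact hreg ⟨by linarith, by omega⟩
        exact_mod_cast this
    rcases le_or_gt (lam * L) (ω / 2) with hK | hK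
    · refine caseA ((n : ℝ) + 1) B (lam * L) ω (lam * M ^ 2) T (t 0) (by linarith) hω hω1
        (by positivity) hK (by positivity) hT htT ?_ hyp ?_ hpot2
      · rcases hcase with h | h
        · exact Or.inl h
        · exact Or.inr ⟨h.1, h.2.1⟩
      · have hb := quad_bound (2 * M) ((ω - lam * L) / (2 * lam)) δ (by
          apply div_pos <;> linarith)
        have hpos : 0 < ω - lam * L := by linarith
        have e : (2 * M) ^ 2 / (4 * ((ω - lam * L) / (2 * lam))) = 2 * (lam * M ^ 2) / (ω - lam * L) := by
          field_simp; ring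
        rw [e] at hb
        rw [← le_div_iff₀ hpos]
        refine le_trans (ht0.trans (le_of_eq ?_)) hb
        field_simp
        ring
    · refine caseB ((n : ℝ) + 1) B (lam * L) ω (lam * M ^ 2) T (t 0)
        (L * D * ((n : ℝ) + 1) / (4 * M)) y (by linarith) hω hω1
        hK (by positivity) hT htT hy0 (by positivity) ?_ hB hcase hyp ?_ hpot2
      · rw [hy]; field_simp; ring
      · have h3 : t 0 ≤ 2 * M * D + L / 2 * D ^ 2 := by
          have : 0 ≤ ω / (2 * lam) * δ ^ 2 := by positivity
          have a1 : 2 * M * δ ≤ 2 * M * D := mul_le_mul_of_nonneg_left hδD (by positivity)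
          have a2 : L / 2 * δ ^ 2 ≤ L / 2 * D ^ 2 :=
            mul_le_mul_of_nonneg_left (pow_le_pow_left₀ hδ0 hδD 2) (by positivity)
          linarith
        have h4 : t 0 * (lam * L) * ((n : ℝ) + 1)
            ≤ (2 * M * D + L / 2 * D ^ 2) * (lam * L) * ((n : ℝ) + 1) := by gcongr
        refine h4.trans (le_of_eq ?_)
        rw [hy]; field_simp; ring

end UPB

open scoped RealInnerProductSpace

namespace UPB

theorem inf_pass {E : Type*} [NormedAddCommGroup E] (X : Set E) (hX : X.Nonempty) (x0 : E)
    (G : ℝ → ℝ) (hG : Continuous G) (A : ℝ) (h : ∀ z ∈ X, A ≤ G ‖x0 - z‖) :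
    A ≤ G (Metric.infDist x0 X) := by
  by_contra! hcon
  have hev := hG.continuousAt.eventually (gt_mem_nhds hcon)
  obtain ⟨δ, hδ, hball⟩ := Metric.eventually_nhds_iff.mp hev
  obtain ⟨z, hz, hzd⟩ := (Metric.infDist_lt_iff hX).mp
    (show Metric.infDist x0 X < Metric.infDist x0 X + δ by linarith)
  have h1 := Metric.infDist_le_dist_of_mem (x := x0) hz
  have h2 := hball (y := dist x0 z) (by
    rw [Real.dist_eq, abs_of_nonneg (by linarith)]; linarith)
  rw [dist_eq_norm] at h2
  linarith [h z hz]

theorem ceil_bound (X : ℝ) (hX : 1 < X) (r : ℕ) (h : (2 : ℝ) ^ r ≤ X) :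
    (r : ℝ) + 1 ≤ (⌈2 * Real.log X⌉ : ℝ) := by
  have hlt : (r : ℝ) < 2 * Real.log X := by
    rcases Nat.eq_zero_or_pos r with h0 | h0
    · subst h0
      have := Real.log_pos hX
      simp; exact this
    · have h1 : Real.log ((2 : ℝ) ^ r) ≤ Real.log X := Real.log_le_log (by positivity) h
      rw [Real.log_pow] at h1
      have h2 := Real.log_two_gt_d9
      have h3 : (0 : ℝ) < r := by exact_mod_cast h0
      nlinarith
  have : (r : ℤ) < ⌈2 * Real.log X⌉ := by
    rw [Int.lt_ceil]; exact_mod_cast hlt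
  have h2 : (r : ℤ) + 1 ≤ ⌈2 * Real.log X⌉ := this
  exact_mod_cast h2

theorem count_core {E : Type*} (c x : ℕ → E) (lam : ℕ → ℝ) (N : ℕ → ℕ) (t : ℕ → ℝ) (T : ℝ)
    (Nbar : ℕ) (hNbar : 1 ≤ Nbar) (x0 : E) (lam0 lmin : ℝ) (hc0 : c 0 = x0) (hl0 : lam 0 = lam0)
    (hN0 : N 0 = 0) (good : ℕ → Prop)
    (hnull : ∀ j, T < t j → N j + 1 < Nbar →
      c (j + 1) = c j ∧ lam (j + 1) = lam j ∧ N (j + 1) = N j + 1)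
    (hreset : ∀ j, T < t j → N j + 1 = Nbar →
      c (j + 1) = c j ∧ lam (j + 1) = lam j / 2 ∧ N (j + 1) = 0)
    (hserious : ∀ j, t j ≤ T → c (j + 1) = x j ∧ lam (j + 1) = lam j ∧ N (j + 1) = 0)
    (hlmin : 0 < lmin) (hlmin0 : lmin < lam0) (hlow : ∀ j, lmin ≤ lam j)
    (Pot : ℕ → E → Prop) (hPot0 : Pot 0 x0)
    (hPot : ∀ j k, (∀ i ≤ j, ¬ good i) → t j ≤ T → Pot k (c j) → Pot (k + 1) (x j))
    (Tb : ℝ) (hPotB : ∀ k y, Pot k y → (k : ℝ) * Nbar ≤ Tb) :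
    ∃ j : ℕ, (j + 1 : ℝ) ≤ Tb + Nbar * (⌈2 * Real.log (lam0 / lmin)⌉ : ℝ) ∧ good j := by
  by_contra! hcon
  have inv : ∀ j, (∀ i < j, ¬ good i) → ∃ k r : ℕ, j ≤ Nbar * (k + r) + N j ∧ N j < Nbar ∧
      lam j = lam0 / 2 ^ r ∧ Pot k (c j) := by
    intro j
    induction j with
    | zero =>
      intro _
      exact ⟨0, 0, by simp, by omega, by simp [hl0], by rw [hc0]; exact hPot0⟩
    | succ j ih =>
      intro hb
      obtain ⟨k, r, h1, h2, h3, h4⟩ := ih (fun i hi => hb i (by omega))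
      rcases le_or_gt (t j) T with hs | hs
      · obtain ⟨a1, a2, a3⟩ := hserious j hs
        refine ⟨k + 1, r, ?_, by omega, by rw [a2, h3], ?_⟩
        · rw [a3]; nlinarith
        · rw [a1]; exact hPot j k (fun i hi => hb i (by omega)) hs h4
      · rcases Nat.lt_or_ge (N j + 1) Nbar with hN | hN
        · obtain ⟨a1, a2, a3⟩ := hnull j hs hN
          exact ⟨k, r, by omega, by omega, by rw [a2, h3], by rw [a1]; exact h4⟩
        · obtain ⟨a1, a2, a3⟩ := hreset j hs (by omega)
          refine ⟨k, r + 1, ?_, by omega, ?_, by rw [a1]; exact h4⟩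
          · rw [a3]; nlinarith
          · rw [a2, h3, pow_succ]; field_simp
  have hX : 1 < lam0 / lmin := by rw [lt_div_iff₀ hlmin]; linarith
  obtain ⟨Bd, hBd⟩ : ∃ Bd, Bd = Tb + Nbar * (⌈2 * Real.log (lam0 / lmin)⌉ : ℝ) := ⟨_, rfl⟩
  rw [← hBd] at hcon
  have hTb : 0 ≤ Tb := by simpa using hPotB 0 x0 hPot0
  have hceil := ceil_bound _ hX 0 (by simpa using hX.le)
  have hBd0 : 0 ≤ Bd := by
    rw [hBd]
    have : (0 : ℝ) ≤ Nbar * (⌈2 * Real.log (lam0 / lmin)⌉ : ℝ) :=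
      mul_nonneg (by positivity) (by push_cast at hceil; linarith)
    linarith
  obtain ⟨k, r, h1, h2, h3, h4⟩ := inv ⌊Bd⌋₊ (by
    intro i hi
    apply hcon i
    have := Nat.floor_le hBd0
    have h' : ((i + 1 : ℕ) : ℝ) ≤ (⌊Bd⌋₊ : ℝ) := by exact_mod_cast hi
    push_cast at h'
    linarith)
  have hr : (2 : ℝ) ^ r ≤ lam0 / lmin := by
    have := hlow ⌊Bd⌋₊
    rw [h3, le_div_iff₀ (by positivity)] at this
    rw [le_div_iff₀ hlmin]; linarith
  have h5 := ceil_bound _ hX r hr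
  have h6 := hPotB k _ h4
  have h7 : (⌊Bd⌋₊ : ℝ) + 1 ≤ k * Nbar + Nbar * ((r : ℝ) + 1) := by
    have : ⌊Bd⌋₊ + 1 ≤ k * Nbar + Nbar * (r + 1) := by nlinarith
    exact_mod_cast this
  have h8 : (Nbar : ℝ) * ((r : ℝ) + 1) ≤ Nbar * (⌈2 * Real.log (lam0 / lmin)⌉ : ℝ) :=
    mul_le_mul_of_nonneg_left h5 (by positivity)
  have := Nat.lt_floor_add_one Bd
  linarith

theorem decay (V V' a am χ : ℝ) (ham : 0 < am) (haa : am ≤ a) (hχ : 0 ≤ χ) (hV : 0 ≤ V)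
    (h : (1 + a) * V' ≤ (1 + (1 - χ) * a) * V) : V' * Real.exp (χ * am / (1 + am)) ≤ V := by
  have ha : 0 < a := by linarith
  have h1 : V' ≤ (1 - χ * a / (1 + a)) * V := by
    have e : (1 - χ * a / (1 + a)) * V = (1 + (1 - χ) * a) * V / (1 + a) := by field_simp; ring
    rw [e, le_div_iff₀ (by positivity)]; linarith
  have hq : χ * am / (1 + am) ≤ χ * a / (1 + a) := by
    rw [div_le_div_iff₀ (by positivity) (by positivity)]
    nlinarith [mul_nonneg hχ (sub_nonneg.mpr haa)]
  have h2 : (1 - χ * a / (1 + a)) ≤ Real.exp (-(χ * am / (1 + am))) := by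
    have := Real.add_one_le_exp (-(χ * am / (1 + am)))
    linarith
  have h3 : V' ≤ Real.exp (-(χ * am / (1 + am))) * V :=
    h1.trans (mul_le_mul_of_nonneg_right h2 hV)
  calc V' * Real.exp (χ * am / (1 + am))
      ≤ (Real.exp (-(χ * am / (1 + am))) * V) * Real.exp (χ * am / (1 + am)) :=
        mul_le_mul_of_nonneg_right h3 (Real.exp_pos _).le
    _ = V * (Real.exp (-(χ * am / (1 + am))) * Real.exp (χ * am / (1 + am))) := by ring
    _ = V := by rw [← Real.exp_add]; simp

theorem decay_bound (m ε χ Nb U dc d : ℝ) (k : ℕ) (hm : 0 < m) (hε : 0 < ε) (hχ : 0 < χ)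
    (hNb : 0 < Nb) (hU : 0 < U)
    (h : (dc ^ 2 + ε / m) * Real.exp (k * (χ * (m * (Nb * ε / U)) / (1 + m * (Nb * ε / U))))
      ≤ d ^ 2 + ε / m) :
    (k : ℝ) * Nb ≤ 1 / χ * (Nb + U / (m * ε)) * Real.log (1 + m * d ^ 2 / ε) := by
  obtain ⟨q, hq⟩ : ∃ q, q = χ * (m * (Nb * ε / U)) / (1 + m * (Nb * ε / U)) := ⟨_, rfl⟩
  have hqp : 0 < q := by rw [hq]; positivity
  rw [← hq] at h
  have h1 : Real.exp (k * q) ≤ 1 + m * d ^ 2 / ε := by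
    have h2 : ε / m * Real.exp (k * q) ≤ d ^ 2 + ε / m := by
      refine le_trans (mul_le_mul_of_nonneg_right ?_ (Real.exp_pos _).le) h
      linarith [sq_nonneg dc]
    have h3 : (1 + m * d ^ 2 / ε) = (d ^ 2 + ε / m) / (ε / m) := by field_simp; ring
    rw [h3, le_div_iff₀ (by positivity)]; linarith
  have h2 : k * q ≤ Real.log (1 + m * d ^ 2 / ε) := by
    rw [Real.le_log_iff_exp_le (by positivity)]; exact h1
  have e : 1 / χ * (Nb + U / (m * ε)) = Nb / q := by
    rw [hq]; field_simp; ring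
  rw [e]
  calc (k : ℝ) * Nb = Nb / q * (k * q) := by field_simp
    _ ≤ _ := mul_le_mul_of_nonneg_left h2 (by positivity)

theorem contr_mu (d d' p q a ω χ lam ε m : ℝ) (hχ : 0 ≤ χ) (hω : 0 < ω) (hχω : ω = 1 - χ)
    (hlam : 0 < lam) (hm : 0 < m) (ha : a = lam * m) (hε : 0 < ε) (hp : 0 ≤ p) (hq : 0 ≤ q)
    (hd' : 0 ≤ d') (htri : d' ≤ p + q)
    (h : lam * ε + d' ^ 2 + χ / ω * p ^ 2 + χ * a * q ^ 2 ≤ d ^ 2) :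
    (1 + a) * (d' ^ 2 + ε / m) ≤ (1 + (1 - χ) * a) * (d ^ 2 + ε / m) := by
  have hap : 0 < a := by rw [ha]; positivity
  have h1 : d' ^ 2 ≤ (p + q) ^ 2 := pow_le_pow_left₀ hd' htri 2
  have h2 : χ * a * (p + q) ^ 2 ≤ (1 + ω * a) * (χ / ω * p ^ 2 + χ * a * q ^ 2) := by
    have e : (1 + ω * a) * (χ / ω * p ^ 2 + χ * a * q ^ 2) - χ * a * (p + q) ^ 2
      = χ / ω * (p - ω * a * q) ^ 2 := by field_simp; ring
    have : 0 ≤ χ / ω * (p - ω * a * q) ^ 2 := by positivity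
    linarith
  have h3 : χ * a * d' ^ 2 ≤ χ * a * (p + q) ^ 2 := mul_le_mul_of_nonneg_left h1 (by positivity)
  have h4 := mul_le_mul_of_nonneg_left h (show 0 ≤ 1 + ω * a by positivity)
  have h5 : a * (ε / m) = lam * ε := by rw [ha]; field_simp
  have h6 : 0 ≤ (lam * ε) * (ω * a) := by positivity
  have hχ' : χ = 1 - ω := by linarith
  have e1 : (1 + a) * (d' ^ 2 + ε / m) = (1 + ω * a) * d' ^ 2 + χ * a * d' ^ 2
    + (1 + ω * a) * (ε / m) + χ * (a * (ε / m)) := by rw [hχ']; ring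
  have e2 : (1 + (1 - χ) * a) * (d ^ 2 + ε / m) = (1 + ω * a) * d ^ 2 + (1 + ω * a) * (ε / m) := by
    rw [hχω]; ring
  rw [e1, e2, h5]
  have h7 : χ * (lam * ε) ≤ lam * ε := mul_le_of_le_one_left (by positivity) (by linarith)
  linarith

theorem norm_comb {E : Type*} [NormedAddCommGroup E] [InnerProductSpace ℝ E] (z y c : E) (α : ℝ) :
    ‖(α • z + (1 - α) • y) - c‖ ^ 2
      = α * ‖z - c‖ ^ 2 + (1 - α) * ‖y - c‖ ^ 2 - α * (1 - α) * ‖z - y‖ ^ 2 := by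
  have e1 : (α • z + (1 - α) • y) - c = α • (z - c) + (1 - α) • (y - c) := by module
  have e2 : z - y = (z - c) - (y - c) := by abel
  rw [e1, e2, norm_add_sq_real, norm_sub_sq_real (z - c) (y - c), norm_smul, norm_smul, inner_smul_left,
    inner_smul_right, mul_pow, mul_pow]
  simp only [Real.norm_eq_abs, sq_abs, conj_trivial]
  ring

end UPB

set_option maxHeartbeats 4000000


open scoped RealInnerProductSpace

/-- Theorem `complprimal-2U-PBt`: total inner-iteration complexity of the
U-PB method. The execution of U-PB is modeled by the sequence of inner iterations
`j = 0, 1, 2, …`, with model `F j`, iterate `x j`, prox-center `c j`, stepsize `lam j`,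
inner counter `N j` (value before the increment of step 2), monotone value `φb j` and gap
`t j`; null, reset and serious updates are governed by the sign of
`t j − (1−χ)ε̄/2` and the counter. -/
theorem upb_complexity
    {n : ℕ} (f h : EuclideanSpace ℝ (Fin n) → ℝ)
    (domf domh : Set (EuclideanSpace ℝ (Fin n)))
    (f' : EuclideanSpace ℝ (Fin n) → EuclideanSpace ℝ (Fin n))
    (Mf Lf : ℝ) (hMf : 0 < Mf) (hLf : 0 ≤ Lf)
    (hsub : domh ⊆ domf)
    (hfconv : ConvexOn ℝ domf f) (hhconv : ConvexOn ℝ domh h)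
    (hflsc : LowerSemicontinuousOn f domf) (hhlsc : LowerSemicontinuousOn h domh)
    (horacle : ∀ x ∈ domh, ∀ u ∈ domf, f x + ⟪f' x, u - x⟫ ≤ f u)
    (hhybrid : ∀ x ∈ domh, ∀ y ∈ domh, ‖f' x - f' y‖ ≤ 2 * Mf + Lf * ‖x - y‖)
    (D : ℝ) (hD : 0 < D) (hdiam : ∀ a ∈ domh, ∀ b ∈ domh, ‖a - b‖ ≤ D)
    (μ ν : ℝ) (hμ0 : 0 ≤ μ) (hν0 : 0 ≤ ν) (hνμ : ν ≤ μ)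
    (hφμ : ∀ a ∈ domh, ∀ b ∈ domh, ∀ α : ℝ, 0 ≤ α → α ≤ 1 →
      f (α • a + (1 - α) • b) + h (α • a + (1 - α) • b)
        ≤ α * (f a + h a) + (1 - α) * (f b + h b) - α * (1 - α) * μ / 2 * ‖a - b‖ ^ 2)
    (hhν : ∀ a ∈ domh, ∀ b ∈ domh, ∀ α : ℝ, 0 ≤ α → α ≤ 1 →
      h (α • a + (1 - α) • b) ≤ α * h a + (1 - α) * h b - α * (1 - α) * ν / 2 * ‖a - b‖ ^ 2)
    (Xstar : Set (EuclideanSpace ℝ (Fin n)))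
    (hXstar : Xstar = {z | z ∈ domh ∧ ∀ u ∈ domh, f z + h z ≤ f u + h u})
    (hXne : Xstar.Nonempty)
    (φstar : ℝ) (hφstar : ∀ z ∈ Xstar, f z + h z = φstar)
    -- inputs of U-PB
    (x0 : EuclideanSpace ℝ (Fin n)) (hx0 : x0 ∈ domh)
    (χ lam0 ε : ℝ) (Nbar : ℕ)
    (hχ0 : 0 ≤ χ) (hχ1 : χ < 1) (hlam0 : 0 < lam0) (hε : 0 < ε) (hNbar : 1 ≤ Nbar)
    -- the execution of U-PB
    (F : ℕ → EuclideanSpace ℝ (Fin n) → ℝ)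
    (x c : ℕ → EuclideanSpace ℝ (Fin n))
    (lam : ℕ → ℝ) (N : ℕ → ℕ) (φb t : ℕ → ℝ)
    (hc0 : c 0 = x0) (hl0 : lam 0 = lam0) (hN0 : N 0 = 0)
    (hFconv : ∀ j, ConvexOn ℝ domf (F j))
    (hFle : ∀ j, ∀ u ∈ domf, F j u ≤ f u)
    (hFlow : ∀ j, N j = 0 → ∀ u ∈ domf, f (c j) + ⟪f' (c j), u - c j⟫ ≤ F j u)
    (hcdom : ∀ j, c j ∈ domh) (hxdom : ∀ j, x j ∈ domh)
    (hxmin : ∀ j, ∀ u ∈ domh,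
      F j (x j) + h (x j) + ‖x j - c j‖ ^ 2 / (2 * lam j)
        ≤ F j u + h u + ‖u - c j‖ ^ 2 / (2 * lam j))
    (hφb0 : ∀ j, N j = 0 →
      φb j = f (x j) + h (x j) + χ / (2 * lam j) * ‖x j - c j‖ ^ 2)
    (hφbrec : ∀ j, N j ≠ 0 →
      φb j = min (φb (j - 1)) (f (x j) + h (x j) + χ / (2 * lam j) * ‖x j - c j‖ ^ 2))
    (ht : ∀ j, t j = φb j - (F j (x j) + h (x j) + ‖x j - c j‖ ^ 2 / (2 * lam j)))
    (hnull : ∀ j, (1 - χ) * ε / 2 < t j → N j + 1 < Nbar →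
      c (j + 1) = c j ∧ lam (j + 1) = lam j ∧ N (j + 1) = N j + 1 ∧
      ∃ fbar : EuclideanSpace ℝ (Fin n) → ℝ,
        ConvexOn ℝ domf fbar ∧ (∀ u ∈ domf, fbar u ≤ f u) ∧
        fbar (x j) = F j (x j) ∧
        (∀ u ∈ domh, fbar (x j) + h (x j) + ‖x j - c j‖ ^ 2 / (2 * lam j)
          ≤ fbar u + h u + ‖u - c j‖ ^ 2 / (2 * lam j)) ∧
        (∀ u ∈ domf, fbar u ≤ F (j + 1) u) ∧
        (∀ u ∈ domf, f (x j) + ⟪f' (x j), u - x j⟫ ≤ F (j + 1) u))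
    (hreset : ∀ j, (1 - χ) * ε / 2 < t j → N j + 1 = Nbar →
      c (j + 1) = c j ∧ lam (j + 1) = lam j / 2 ∧ N (j + 1) = 0)
    (hserious : ∀ j, t j ≤ (1 - χ) * ε / 2 →
      c (j + 1) = x j ∧ lam (j + 1) = lam j ∧ N (j + 1) = 0)
    (B U d0 : ℝ)
    (hB : B = 8 + 12 * Real.log (1 + Lf ^ 2 * D ^ 2 * Nbar / (16 * Mf ^ 2)))
    (hU : U = 4 * (Mf ^ 2 + ε * Lf) * B / (1 - χ) ^ 2 + Nbar * ε / lam0)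
    (hd0 : d0 = Metric.infDist x0 Xstar) :
    (∃ j : ℕ, (j + 1 : ℝ) ≤ d0 ^ 2 * U / ε ^ 2
        + Nbar * (⌈2 * Real.log (lam0 * U / (Nbar * ε))⌉ : ℝ) ∧
      f (x j) + h (x j) - φstar ≤ ε) ∧
    (0 < χ → 0 < μ →
      ∃ j : ℕ, (j + 1 : ℝ) ≤ 1 / χ * (Nbar + U / (μ * ε)) * Real.log (1 + μ * d0 ^ 2 / ε)
          + Nbar * (⌈2 * Real.log (lam0 * U / (Nbar * ε))⌉ : ℝ) ∧
        f (x j) + h (x j) - φstar ≤ ε) ∧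
    (0 < ν →
      ∃ j : ℕ, (j + 1 : ℝ) ≤ (Nbar + U / (ν * ε)) * Real.log (1 + μ * d0 ^ 2 / ε)
          + Nbar * (⌈2 * Real.log (lam0 * U / (Nbar * ε))⌉ : ℝ) ∧
        f (x j) + h (x j) - φstar ≤ ε) := by
  classical
  obtain ⟨ω, hω⟩ : ∃ ω, ω = 1 - χ := ⟨_, rfl⟩
  have hωp : 0 < ω := by linarith
  have hω1 : ω ≤ 1 := by linarith
  obtain ⟨T, hT⟩ : ∃ T, T = (1 - χ) * ε / 2 := ⟨_, rfl⟩
  have hTω : T = ω * ε / 2 := by rw [hT, hω]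
  have hTp : 0 < T := by rw [hTω]; positivity
  rw [← hT] at hnull hreset hserious
  have hS : Convex ℝ domh := hhconv.1
  have hNbp : (0 : ℝ) < Nbar := by exact_mod_cast hNbar
  have hB8 : 8 ≤ B := by
    rw [hB]
    have : 0 ≤ Real.log (1 + Lf ^ 2 * D ^ 2 * Nbar / (16 * Mf ^ 2)) := by
      apply Real.log_nonneg
      have : 0 ≤ Lf ^ 2 * D ^ 2 * Nbar / (16 * Mf ^ 2) := by positivity
      linarith
    linarith
  have hBp : 0 < B := by linarith
  have hMLp : 0 < Mf ^ 2 + ε * Lf := by positivity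
  rw [← hω] at hU
  have hU1p : 0 < 4 * (Mf ^ 2 + ε * Lf) * B / ω ^ 2 := by positivity
  have hU2p : 0 < Nbar * ε / lam0 := by positivity
  have hUp : 0 < U := by linarith
  obtain ⟨lmin, hlmin⟩ : ∃ l, l = Nbar * ε / U := ⟨_, rfl⟩
  have hlminp : 0 < lmin := by rw [hlmin]; positivity
  have hlmin0 : lmin < lam0 := by
    rw [hlmin, div_lt_iff₀ hUp]
    have : Nbar * ε / lam0 < U := by linarith
    rw [div_lt_iff₀ hlam0] at this
    linarith
  have hN_lt : ∀ j, N j < Nbar := by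
    intro j
    induction j with
    | zero => omega
    | succ j ih =>
      rcases le_or_gt (t j) T with hs | hs
      · have := (hserious j hs).2.2; omega
      · rcases Nat.lt_or_ge (N j + 1) Nbar with h' | h'
        · have := (hnull j hs h').2.2.1; omega
        · have := (hreset j hs (by omega)).2.2; omega
  have hprev : ∀ j, N j ≠ 0 → ∃ i, j = i + 1 ∧ T < t i ∧ N i + 1 < Nbar ∧ N j = N i + 1 := by
    intro j hj
    cases j with
    | zero => exact absurd hN0 hj
    | succ i =>
      refine ⟨i, rfl, ?_⟩
      rcases le_or_gt (t i) T with hs | hs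
      · exact absurd (hserious i hs).2.2 hj
      · have := hN_lt i
        rcases Nat.lt_or_ge (N i + 1) Nbar with h' | h'
        · exact ⟨hs, h', (hnull i hs h').2.2.1⟩
        · exact absurd (hreset i hs (by omega)).2.2 hj
  have hlampos : ∀ j, 0 < lam j := by
    intro j
    induction j with
    | zero => rw [hl0]; exact hlam0
    | succ j ih =>
      rcases le_or_gt (t j) T with hs | hs
      · rw [(hserious j hs).2.1]; exact ih
      · have := hN_lt j
        rcases Nat.lt_or_ge (N j + 1) Nbar with h' | h'
        · rw [(hnull j hs h').2.1]; exact ih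
        · rw [(hreset j hs (by omega)).2.1]; positivity
  have hcyc : ∀ m j, N j = m → ∃ j0, j = j0 + m ∧ ∀ i ≤ m, N (j0 + i) = i ∧ c (j0 + i) = c j ∧
      lam (j0 + i) = lam j ∧ (i < m → T < t (j0 + i)) := by
    intro m
    induction m with
    | zero =>
      intro j hj
      refine ⟨j, rfl, ?_⟩
      intro i hi
      obtain rfl : i = 0 := by omega
      exact ⟨hj, rfl, rfl, fun h => absurd h (lt_irrefl _)⟩
    | succ m ih =>
      intro j hj
      obtain ⟨i, rfl, hi1, hi2, hi3⟩ := hprev j (by omega)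
      obtain ⟨j0, hj0, hall⟩ := ih i (by omega)
      obtain ⟨a1, a2, a3, -⟩ := hnull i hi1 hi2
      refine ⟨j0, by omega, ?_⟩
      intro l hl
      rcases Nat.lt_or_ge m l with h' | h'
      · obtain rfl : l = m + 1 := by omega
        have e : j0 + (m + 1) = i + 1 := by omega
        rw [e]
        exact ⟨hj, rfl, rfl, fun h => absurd h (lt_irrefl _)⟩
      · obtain ⟨b1, b2, b3, b4⟩ := hall l h'
        refine ⟨b1, by rw [b2, a1], by rw [b3, a2], ?_⟩
        intro _
        rcases Nat.lt_or_ge l m with h'' | h''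
        · exact b4 h''
        · obtain rfl : l = m := by omega
          rw [← hj0]; exact hi1
  -- facts along a null step
  have hnf : ∀ j, T < t j → N j + 1 < Nbar →
      t (j + 1) ≤ t j - ‖x (j + 1) - x j‖ ^ 2 / (2 * lam j) ∧
      t (j + 1) ≤ f (x (j + 1)) - f (x j) - ⟪f' (x j), x (j + 1) - x j⟫
        - ω / (2 * lam j) * ‖x (j + 1) - c j‖ ^ 2 := by
    intro j hj hNj
    obtain ⟨a1, a2, a3, fbar, b1, b2, b3, b4, b5, b6⟩ := hnull j hj hNj
    have hφ := hφbrec (j + 1) (by omega)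
    rw [Nat.add_sub_cancel, a1, a2] at hφ
    have htj := ht j
    have htj1 := ht (j + 1)
    rw [a1, a2] at htj1
    have hx1 := hxdom (j + 1)
    constructor
    · have hg := UPB.prox_growth domh hS (fun u => fbar u + h u) 0 (lam j) le_rfl (hlampos j)
        (by
          intro a ha b hb α hα0 hα1
          have h1 := b1.2 (hsub ha) (hsub hb) hα0 (by linarith : 0 ≤ 1 - α) (by ring)
          have h2 := hhconv.2 ha hb hα0 (by linarith : 0 ≤ 1 - α) (by ring)
          simp only [smul_eq_mul] at h1 h2
          show fbar (α • a + (1 - α) • b) + h (α • a + (1 - α) • b)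
            ≤ α * (fbar a + h a) + (1 - α) * (fbar b + h b) - α * (1 - α) * 0 / 2 * ‖a - b‖ ^ 2
          have e : α * (1 - α) * 0 / 2 * ‖a - b‖ ^ 2 = 0 := by ring
          rw [e]
          linarith)
        (c j) (x j) (hxdom j) b4 (x (j + 1)) hx1
      have hle : φb (j + 1) ≤ φb j := by rw [hφ]; exact min_le_left _ _
      have h5 := b5 (x (j + 1)) (hsub hx1)
      have e : (1 + lam j * 0) / (2 * lam j) * ‖x (j + 1) - x j‖ ^ 2
        = ‖x (j + 1) - x j‖ ^ 2 / (2 * lam j) := by ring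
      rw [e] at hg
      rw [b3] at hg
      linarith
    · have hle : φb (j + 1) ≤ f (x (j + 1)) + h (x (j + 1))
          + χ / (2 * lam j) * ‖x (j + 1) - c j‖ ^ 2 := by rw [hφ]; exact min_le_right _ _
      have h6 := b6 (x (j + 1)) (hsub hx1)
      have e : ω / (2 * lam j) * ‖x (j + 1) - c j‖ ^ 2 = ‖x (j + 1) - c j‖ ^ 2 / (2 * lam j)
        - χ / (2 * lam j) * ‖x (j + 1) - c j‖ ^ 2 := by rw [hω]; ring
      linarith
  -- the stepsize is bounded below at reset steps
  have hres : ∀ j, T < t j → N j + 1 = Nbar → lmin ≤ lam j / 2 := by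
    intro j hj hNj
    obtain ⟨j0, hj0, hall⟩ := hcyc (N j) j rfl
    have hNc : ((N j : ℕ) : ℝ) + 1 = Nbar := by exact_mod_cast hNj
    by_contra! hcon
    have hle := UPB.cycle_bound domh hS f f' Mf Lf D hMf hLf hD
      (fun a ha u hu => horacle a ha u (hsub hu)) hhybrid hdiam (lam j) ω T (hlampos j) hωp hω1 hTp
      (N j) (c j) (hcdom j) (fun i => x (j0 + i)) (fun i => hxdom _) (fun i => t (j0 + i))
      (by
        obtain ⟨a1, a2, a3, -⟩ := hall 0 (Nat.zero_le _)
        simp only [Nat.add_zero] at a1 a2 a3 ⊢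
        have b1 := hφb0 j0 a1
        have b2 := hFlow j0 a1 (x j0) (hsub (hxdom j0))
        have b3 := ht j0
        rw [a2] at b2
        rw [b1, a2, a3] at b3
        have e : ω / (2 * lam j) * ‖x j0 - c j‖ ^ 2 = ‖x j0 - c j‖ ^ 2 / (2 * lam j)
          - χ / (2 * lam j) * ‖x j0 - c j‖ ^ 2 := by rw [hω]; ring
        linarith)
      (by
        intro i hi
        obtain ⟨a1, a2, a3, a4⟩ := hall i hi.le
        have := (hnf (j0 + i) (a4 hi) (by omega)).1
        rw [a3] at this
        exact this)
      (by
        intro i hi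
        obtain ⟨a1, a2, a3, a4⟩ := hall i hi.le
        have := (hnf (j0 + i) (a4 hi) (by omega)).2
        rw [a3, a2] at this
        exact this)
      B (by rw [hNc]; exact hB)
      (by
        rw [hNc]
        have h1 : lmin * (4 * (Mf ^ 2 + ε * Lf) * B / ω ^ 2) ≤ Nbar * ε := by
          have : lmin * U = Nbar * ε := by rw [hlmin]; field_simp
          rw [← this]
          exact mul_le_mul_of_nonneg_left (by linarith) hlminp.le
        have h2 : lam j / 2 * (4 * (Mf ^ 2 + ε * Lf) * B / ω ^ 2) ≤ Nbar * ε :=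
          le_trans (mul_le_mul_of_nonneg_right hcon.le hU1p.le) h1
        have e1 : lam j / 2 * (4 * (Mf ^ 2 + ε * Lf) * B / ω ^ 2)
          = (lam j / 2 * (4 * (Mf ^ 2 + ε * Lf) * B)) / ω ^ 2 := by ring
        rw [e1, div_le_iff₀ (by positivity)] at h2
        have e2 : lam j * Mf ^ 2 * B + 2 * T * (lam j * Lf / ω) * B
          = lam j * (Mf ^ 2 + ε * Lf) * B := by rw [hTω]; field_simp
        rw [e2, hTω]
        linarith)
    have hle' : t (j0 + N j) ≤ T := hle
    rw [← hj0] at hle'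
    linarith
  have hlow : ∀ j, lmin ≤ lam j := by
    intro j
    induction j with
    | zero => rw [hl0]; exact hlmin0.le
    | succ j ih =>
      rcases le_or_gt (t j) T with hs | hs
      · rw [(hserious j hs).2.1]; exact ih
      · have := hN_lt j
        rcases Nat.lt_or_ge (N j + 1) Nbar with h' | h'
        · rw [(hnull j hs h').2.1]; exact ih
        · rw [(hreset j hs (by omega)).2.1]; exact hres j hs (by omega)
  -- the point realizing the monotone value
  have hy : ∀ m j, N j = m → (∀ i ≤ j, ¬ (f (x i) + h (x i) - φstar ≤ ε)) →
      ∃ y ∈ domh, φb j = f y + h y + χ / (2 * lam j) * ‖y - c j‖ ^ 2 ∧ ε < f y + h y - φstar := by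
    intro m
    induction m with
    | zero =>
      intro j hj hb
      exact ⟨x j, hxdom j, hφb0 j hj, not_le.mp (hb j le_rfl)⟩
    | succ m ih =>
      intro j hj hb
      obtain ⟨i, rfl, hi1, hi2, hi3⟩ := hprev j (by omega)
      obtain ⟨a1, a2, a3, -⟩ := hnull i hi1 hi2
      obtain ⟨y, hyd, hy1, hy2⟩ := ih i (by omega) (fun l hl => hb l (by omega))
      have hφ := hφbrec (i + 1) (by omega)
      rw [Nat.add_sub_cancel] at hφ
      rcases min_choice (φb i) (f (x (i + 1)) + h (x (i + 1))
        + χ / (2 * lam (i + 1)) * ‖x (i + 1) - c (i + 1)‖ ^ 2) with hm | hm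
      · exact ⟨y, hyd, by rw [hφ, hm, hy1, a1, a2], hy2⟩
      · exact ⟨x (i + 1), hxdom _, by rw [hφ, hm], not_le.mp (hb _ le_rfl)⟩
  have hzmem : ∀ z ∈ Xstar, z ∈ domh := by
    intro z hz; rw [hXstar] at hz; exact hz.1
  -- serious step, weighted with the convexity modulus of h
  have hser1 : ∀ j, (∀ i ≤ j, ¬ (f (x i) + h (x i) - φstar ≤ ε)) → t j ≤ T → ∀ z ∈ Xstar,
      lam j * ε + (1 + lam j * ν) * ‖x j - z‖ ^ 2 ≤ ‖c j - z‖ ^ 2 := by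
    intro j hb htj z hz
    obtain ⟨y, hyd, hy1, hy2⟩ := hy (N j) j rfl hb
    have hg := UPB.prox_growth domh hS (fun u => F j u + h u) ν (lam j) hν0 (hlampos j)
        (by
          intro a ha b hb α hα0 hα1
          have h1 := (hFconv j).2 (hsub ha) (hsub hb) hα0 (by linarith : 0 ≤ 1 - α) (by ring)
          have h2 := hhν a ha b hb α hα0 hα1
          simp only [smul_eq_mul] at h1
          show F j (α • a + (1 - α) • b) + h (α • a + (1 - α) • b)
            ≤ α * (F j a + h a) + (1 - α) * (F j b + h b) - α * (1 - α) * ν / 2 * ‖a - b‖ ^ 2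
          linarith)
        (c j) (x j) (hxdom j) (hxmin j) z (hzmem z hz)
    have h1 := hFle j z (hsub (hzmem z hz))
    have h2 := hφstar z hz
    have h3 := ht j
    have hl := hlampos j
    have h4 : 0 ≤ χ / (2 * lam j) * ‖y - c j‖ ^ 2 := by positivity
    have h5 : T ≤ ε / 2 := by rw [hTω]; nlinarith
    rw [norm_sub_rev z (x j), norm_sub_rev z (c j)] at hg
    have h6 : ε / 2 + (1 + lam j * ν) / (2 * lam j) * ‖x j - z‖ ^ 2 ≤ ‖c j - z‖ ^ 2 / (2 * lam j) := by
      linarith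
    rw [le_div_iff₀ (by positivity)] at h6
    refine le_trans (le_of_eq ?_) h6
    field_simp
  -- serious step, weighted with the convexity modulus of φ
  have hser2 : ∀ j, (∀ i ≤ j, ¬ (f (x i) + h (x i) - φstar ≤ ε)) → t j ≤ T → ∀ z ∈ Xstar,
      0 < μ → (1 + lam j * μ) * (‖x j - z‖ ^ 2 + ε / μ)
        ≤ (1 + (1 - χ) * (lam j * μ)) * (‖c j - z‖ ^ 2 + ε / μ) := by
    intro j hb htj z hz hμ
    obtain ⟨y, hyd, hy1, hy2⟩ := hy (N j) j rfl hb
    have hzd := hzmem z hz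
    have hl := hlampos j
    obtain ⟨u, hu⟩ : ∃ u, u = ω • z + (1 - ω) • y := ⟨_, rfl⟩
    have hud : u ∈ domh := by
      rw [hu]; exact hS hzd hyd hωp.le (by linarith) (by ring)
    have hg := UPB.prox_growth domh hS (fun u => F j u + h u) 0 (lam j) le_rfl hl
        (by
          intro a ha b hb α hα0 hα1
          have h1 := (hFconv j).2 (hsub ha) (hsub hb) hα0 (by linarith : 0 ≤ 1 - α) (by ring)
          have h2 := hhconv.2 ha hb hα0 (by linarith : 0 ≤ 1 - α) (by ring)
          simp only [smul_eq_mul] at h1 h2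
          show F j (α • a + (1 - α) • b) + h (α • a + (1 - α) • b)
            ≤ α * (F j a + h a) + (1 - α) * (F j b + h b) - α * (1 - α) * 0 / 2 * ‖a - b‖ ^ 2
          have e : α * (1 - α) * 0 / 2 * ‖a - b‖ ^ 2 = 0 := by ring
          rw [e]
          linarith)
        (c j) (x j) (hxdom j) (hxmin j) u hud
    have h1 := hFle j u (hsub hud)
    have h2 := hφstar z hz
    have h3 := ht j
    have h4 := hφμ z hzd y hyd ω hωp.le hω1
    rw [← hu] at h4
    have n1 := UPB.norm_comb z y (c j) ω
    have n2 := UPB.norm_comb z y (x j) ω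
    rw [← hu] at n1 n2
    have hχω : 1 - ω = χ := by linarith
    rw [hχω] at n1 n2 h4
    have e0 : (1 + lam j * 0) / (2 * lam j) * ‖u - x j‖ ^ 2 = ‖u - x j‖ ^ 2 / (2 * lam j) := by ring
    rw [e0] at hg
    rw [n1, n2] at hg
    rw [h2] at h4
    have htri : ‖x j - z‖ ≤ ‖y - x j‖ + ‖z - y‖ := by
      calc ‖x j - z‖ = ‖(y - x j) + (z - y)‖ := by rw [norm_sub_rev]; congr 1; abel
        _ ≤ _ := norm_add_le _ _
    refine UPB.contr_mu ‖c j - z‖ ‖x j - z‖ ‖y - x j‖ ‖z - y‖ (lam j * μ) ω χ (lam j) ε μ hχ0 hωp hω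
      hl hμ rfl hε (norm_nonneg _) (norm_nonneg _) (norm_nonneg _) htri ?_
    rw [norm_sub_rev z (x j), norm_sub_rev z (c j)] at hg
    generalize ‖c j - z‖ ^ 2 = dd at *
    generalize ‖x j - z‖ ^ 2 = dp at *
    generalize ‖y - x j‖ ^ 2 = pp at *
    generalize ‖z - y‖ ^ 2 = qq at *
    generalize ‖y - c j‖ ^ 2 = rr at *
    have h5 : ω * ε + χ * (f y + h y - φstar) ≤ f y + h y - φstar := by
      have := mul_le_mul_of_nonneg_left hy2.le hωp.le
      rw [← hχω]; linarith
    have h6 : ω * ε / 2 + (ω * dp + χ * pp) / (2 * lam j) + ω * χ * μ / 2 * qq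
        ≤ ω * dd / (2 * lam j) := by
      have e1 : (ω * dp + χ * pp - ω * χ * qq) / (2 * lam j) = (ω * dp + χ * pp) / (2 * lam j)
        - ω * χ * qq / (2 * lam j) := by ring
      have e2 : (ω * dd + χ * rr - ω * χ * qq) / (2 * lam j) = ω * dd / (2 * lam j)
        + χ / (2 * lam j) * rr - ω * χ * qq / (2 * lam j) := by ring
      rw [e1, e2] at hg
      have e3 : ω * φstar = φstar - χ * φstar := by rw [← hχω]; ring
      linarith
    have h7 := mul_le_mul_of_nonneg_left h6 (show 0 ≤ 2 * lam j / ω by positivity)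
    refine le_trans (le_of_eq ?_) (h7.trans (le_of_eq ?_))
    · field_simp
      ring
    · field_simp
  have hnull' : ∀ j, T < t j → N j + 1 < Nbar →
      c (j + 1) = c j ∧ lam (j + 1) = lam j ∧ N (j + 1) = N j + 1 := by
    intro j h1 h2
    obtain ⟨a1, a2, a3, -⟩ := hnull j h1 h2
    exact ⟨a1, a2, a3⟩
  have hXe : lam0 * U / (Nbar * ε) = lam0 / lmin := by rw [hlmin]; field_simp
  rw [hXe]
  refine ⟨?_, ?_, ?_⟩
  · refine UPB.count_core c x lam N t T Nbar hNbar x0 lam0 lmin hc0 hl0 hN0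
      (fun j => f (x j) + h (x j) - φstar ≤ ε) hnull' hreset hserious hlminp hlmin0 hlow
      (fun k y => ∀ z ∈ Xstar, ‖y - z‖ ^ 2 + k * (lmin * ε) ≤ ‖x0 - z‖ ^ 2) ?_ ?_ _ ?_
    · intro z _; simp
    · intro j k hb htj hP z hz
      have h1 := hP z hz
      have h2 := hser1 j hb htj z hz
      have h3 : 0 ≤ lam j * ν * ‖x j - z‖ ^ 2 := by have := hlampos j; positivity
      have h4 := mul_le_mul_of_nonneg_right (hlow j) hε.le
      push_cast
      linarith
    · intro k y hP
      rw [hd0]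
      refine UPB.inf_pass Xstar hXne x0 (fun d => d ^ 2 * U / ε ^ 2) (by fun_prop) _ ?_
      intro z hz
      have h1 := hP z hz
      have h2 : (k : ℝ) * (lmin * ε) ≤ ‖x0 - z‖ ^ 2 := by linarith [sq_nonneg ‖y - z‖]
      show (k : ℝ) * Nbar ≤ ‖x0 - z‖ ^ 2 * U / ε ^ 2
      rw [le_div_iff₀ (by positivity)]
      calc (k : ℝ) * Nbar * ε ^ 2 = k * (lmin * ε) * U := by rw [hlmin]; field_simp
        _ ≤ _ := mul_le_mul_of_nonneg_right h2 hUp.le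
  · intro hχp hμp
    refine UPB.count_core c x lam N t T Nbar hNbar x0 lam0 lmin hc0 hl0 hN0
      (fun j => f (x j) + h (x j) - φstar ≤ ε) hnull' hreset hserious hlminp hlmin0 hlow
      (fun k y => ∀ z ∈ Xstar, (‖y - z‖ ^ 2 + ε / μ) * Real.exp (k * (χ * (μ * lmin) / (1 + μ * lmin)))
        ≤ ‖x0 - z‖ ^ 2 + ε / μ) ?_ ?_ _ ?_
    · intro z _; simp
    · intro j k hb htj hP z hz
      have h1 := hP z hz
      have h2 := UPB.decay _ _ (lam j * μ) (μ * lmin) χ (by positivity) (by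
        have := mul_le_mul_of_nonneg_left (hlow j) hμp.le; linarith) hχp.le (by positivity)
        (hser2 j hb htj z hz hμp)
      have e : ((k + 1 : ℕ) : ℝ) * (χ * (μ * lmin) / (1 + μ * lmin))
        = χ * (μ * lmin) / (1 + μ * lmin) + k * (χ * (μ * lmin) / (1 + μ * lmin)) := by
        push_cast; ring
      rw [e, Real.exp_add, ← mul_assoc]
      exact (mul_le_mul_of_nonneg_right h2 (Real.exp_pos _).le).trans h1
    · intro k y hP
      rw [hd0]
      refine UPB.inf_pass Xstar hXne x0
        (fun d => 1 / χ * (Nbar + U / (μ * ε)) * Real.log (1 + μ * d ^ 2 / ε)) ?_ _ ?_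
      · refine continuous_const.mul (Continuous.log (by fun_prop) ?_)
        intro d; positivity
      · intro z hz
        have h1 := hP z hz
        rw [hlmin] at h1
        exact UPB.decay_bound μ ε χ Nbar U _ _ k hμp hε hχp hNbp hUp h1
  · intro hνp
    have hμp : 0 < μ := by linarith
    refine UPB.count_core c x lam N t T Nbar hNbar x0 lam0 lmin hc0 hl0 hN0
      (fun j => f (x j) + h (x j) - φstar ≤ ε) hnull' hreset hserious hlminp hlmin0 hlow
      (fun k y => ∀ z ∈ Xstar, (‖y - z‖ ^ 2 + ε / ν) * Real.exp (k * (1 * (ν * lmin) / (1 + ν * lmin)))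
        ≤ ‖x0 - z‖ ^ 2 + ε / ν) ?_ ?_ _ ?_
    · intro z _; simp
    · intro j k hb htj hP z hz
      have h1 := hP z hz
      have h2 := UPB.decay (‖c j - z‖ ^ 2 + ε / ν) (‖x j - z‖ ^ 2 + ε / ν)
        (lam j * ν) (ν * lmin) 1 (by positivity) (by
        have := mul_le_mul_of_nonneg_left (hlow j) hνp.le; linarith) zero_le_one (by positivity)
        (by
          have a1 := hser1 j hb htj z hz
          have a2 : lam j * ν * (ε / ν) = lam j * ε := by field_simp
          have e1 : (1 + lam j * ν) * (‖x j - z‖ ^ 2 + ε / ν)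
            = (1 + lam j * ν) * ‖x j - z‖ ^ 2 + ε / ν + lam j * ν * (ε / ν) := by ring
          have e2 : (1 + (1 - 1) * (lam j * ν)) * (‖c j - z‖ ^ 2 + ε / ν)
            = ‖c j - z‖ ^ 2 + ε / ν := by ring
          rw [e1, e2, a2]
          linarith)
      have e : ((k + 1 : ℕ) : ℝ) * (1 * (ν * lmin) / (1 + ν * lmin))
        = 1 * (ν * lmin) / (1 + ν * lmin) + k * (1 * (ν * lmin) / (1 + ν * lmin)) := by
        push_cast; ring
      rw [e, Real.exp_add, ← mul_assoc]
      exact (mul_le_mul_of_nonneg_right h2 (Real.exp_pos _).le).trans h1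
    · intro k y hP
      rw [hd0]
      refine UPB.inf_pass Xstar hXne x0
        (fun d => (Nbar + U / (ν * ε)) * Real.log (1 + μ * d ^ 2 / ε)) ?_ _ ?_
      · refine continuous_const.mul (Continuous.log (by fun_prop) ?_)
        intro d; positivity
      · intro z hz
        have h1 := hP z hz
        rw [hlmin] at h1
        have h2 := UPB.decay_bound ν ε 1 Nbar U _ _ k hνp hε one_pos hNbp hUp h1
        rw [div_one, one_mul] at h2
        refine h2.trans (mul_le_mul_of_nonneg_left ?_ (by positivity))
        apply Real.log_le_log (by positivity)
        gcongr
end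

section
/- Assume M_f > 0, that ‖x − y‖ ≤ D for all x, y ∈ dom h (for some D > 0), and that the first model of the cycle satisfies ℓ_f(·; x̂) ≤ f_i. Let N̄ ≥ 1 be an integer and set B := 8 + 12·log(1 + L_f²D²N̄/(16M_f²)). If the stepsize satisfies λ ≤ (1−χ)²N̄ε̄ / (2(M_f² + ε̄L_f)B), and the cycle hypotheses (prox subproblem minimizers, monotone values φ̄_ℓ, and bundle updates between consecutive iterations) hold for iterations ℓ = i, …, i+N̄−1, then there exists an index ℓ with i ≤ ℓ ≤ i+N̄−1 such that t_ℓ ≤ (1−χ)ε̄/2; that is, the cycle must be a serious one. -/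
open scoped RealInnerProductSpace


lemma upb_step (a a' d b : ℝ) (hb : 0 ≤ b) (ha' : 0 < a') (hd : 0 ≤ d)
    (h1 : a' + d ^ 2 ≤ a) (h2 : a' ≤ d + b * d ^ 2) :
    1 + (1 / a + (2 * b + 1) * Real.log (1 / a))
      ≤ 1 / a' + (2 * b + 1) * Real.log (1 / a') := by
  have ha : 0 < a := by nlinarith [sq_nonneg d]
  have key : a' ^ 2 ≤ d ^ 2 * (1 + 2 * b * a') := by
    have hbd : 0 ≤ b * d ^ 2 := by positivity
    by_cases hc : a' ≤ b * d ^ 2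
    · nlinarith [sq_nonneg d]
    · push Not at hc
      have : (a' - b * d ^ 2) ^ 2 ≤ d ^ 2 := by
        apply pow_le_pow_left₀ <;> linarith
      nlinarith [sq_nonneg (b * d ^ 2)]
  have hK : 0 ≤ 2 * b + 1 := by linarith
  have hkey2 : a * a' ≤ (a - a') * (1 + (2 * b + 1) * a') := by
    nlinarith [mul_le_mul_of_nonneg_right (show d ^ 2 ≤ a - a' by linarith)
      (show 0 ≤ 1 + 2 * b * a' by positivity)]
  have hlog : 1 - a' / a ≤ Real.log (1 / a') - Real.log (1 / a) := by
    rw [← Real.log_div (by positivity) (by positivity)]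
    have := Real.one_sub_inv_le_log_of_pos (show 0 < (1 / a') / (1 / a) by positivity)
    have e : ((1 / a') / (1 / a))⁻¹ = a' / a := by field_simp
    rw [e] at this
    exact this
  have h3 : 1 ≤ 1 / a' - 1 / a + (2 * b + 1) * (1 - a' / a) := by
    have e : 1 / a' - 1 / a + (2 * b + 1) * (1 - a' / a)
        = ((a - a') * (1 + (2 * b + 1) * a')) / (a * a') := by
      field_simp
    rw [e, le_div_iff₀ (by positivity)]
    linarith
  nlinarith [mul_le_mul_of_nonneg_left hlog hK]

lemma upb_tele (N : ℕ) (b : ℝ) (hb : 0 ≤ b) (a d : ℕ → ℝ)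
    (hd : ∀ k, k + 1 < N → 0 ≤ d k)
    (hpos : ∀ k, k < N → 0 < a k)
    (h1 : ∀ k, k + 1 < N → a (k + 1) + d k ^ 2 ≤ a k)
    (h2 : ∀ k, k + 1 < N → a (k + 1) ≤ d k + b * d k ^ 2) :
    ∀ k, k < N → (k : ℝ) + (1 / a 0 + (2 * b + 1) * Real.log (1 / a 0))
      ≤ 1 / a k + (2 * b + 1) * Real.log (1 / a k) := by
  intro k
  induction k with
  | zero => intro _; simp
  | succ k ih =>
    intro hk
    have := ih (by omega)
    have := upb_step (a k) (a (k + 1)) (d k) b hb (hpos _ hk) (hd k hk) (h1 k hk) (h2 k hk)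
    push_cast
    linarith

lemma upb_exp3 : (20 : ℝ) ≤ Real.exp 3 := by
  have h := Real.exp_one_gt_d9
  have e : Real.exp 3 = Real.exp 1 ^ 3 := by
    rw [← Real.exp_nat_mul]; norm_num
  rw [e]
  have : (2.718 : ℝ) ^ 3 ≤ Real.exp 1 ^ 3 := by
    apply pow_le_pow_left₀ <;> linarith
  norm_num at this ⊢
  linarith

lemma upb_log20 (y : ℝ) (hy : 0 < y) (h : y ≤ 20) : Real.log y ≤ 3 := by
  rw [Real.log_le_iff_le_exp hy]; linarith [upb_exp3]

set_option maxHeartbeats 2000000 in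
/-- The numerical heart of case I. -/
lemma upb_num (N : ℕ) (b R ω X a0 r0 u : ℝ) (hb : 0 ≤ b) (hR : 0 < R)
    (hω : 0 < ω) (hω1 : ω ≤ 1) (hX : 0 < X) (ha0 : 0 < a0) (hXa : 1 < X * a0)
    (hu : u = 3 / 2 * Real.log (1 + b ^ 2 * R ^ 2 * N))
    (hXle : X + 16 * b / ω ≤ ω * N / (1 + u))
    (hcase : N ≤ 39 ∨ (40 ≤ N ∧ 1 / 10 < 2 * b * R))
    (hr0 : 0 ≤ r0) (hr0R : r0 ≤ R) (ha0le : a0 ≤ r0 + (b - ω) * r0 ^ 2) :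
    X + (2 * b + 1) * Real.log (X * a0) ≤ N - 1 + 1 / a0 := by
  set ρ := b ^ 2 * R ^ 2 * N with hρdef
  have hNr : (0:ℝ) ≤ N := Nat.cast_nonneg N
  have hρ : 0 ≤ ρ := by positivity
  have hlogρ : 0 ≤ Real.log (1 + ρ) := Real.log_nonneg (by linarith)
  have hu0 : 0 ≤ u := by rw [hu]; positivity
  have hu1 : 0 < 1 + u := by linarith
  have hbω : 16 * b ≤ 16 * b / ω := by
    rw [le_div_iff₀ hω]; nlinarith
  have hbω0 : 0 ≤ 16 * b / ω := by positivity
  have hωN : ω * N / (1 + u) ≤ ω * N := div_le_self (by positivity) (by linarith)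
  have hN2 : ω * N / (1 + u) ≤ N / (1 + u) := by
    gcongr; nlinarith
  have hNu : (N : ℝ) / (1 + u) = N - N * u / (1 + u) := by field_simp; ring
  have hx0 : 0 < 1 / a0 := by positivity
  rcases lt_or_ge b (ω / 2) with hbs | hbl
  · -- b < ω/2
    have hob : 0 < ω - b := by linarith
    have ha04 : a0 * (4 * (ω - b)) ≤ 1 := by
      nlinarith [sq_nonneg (1 - 2 * (ω - b) * r0)]
    have hx1 : 4 * (ω - b) ≤ 1 / a0 := by
      rw [le_div_iff₀ ha0]; linarith
    have hX1 : 1 / a0 < X := by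
      rw [div_lt_iff₀ ha0]; linarith
    have hYN : X * a0 ≤ N / 2 := by
      have : a0 * (2 * ω) ≤ 1 := by nlinarith
      nlinarith
    rcases hcase with hN | ⟨hN, hη⟩
    · have hN39 : (N : ℝ) ≤ 39 := by exact_mod_cast hN
      have hN4 : 4 ≤ N := by
        by_contra hcon
        have : (N : ℝ) ≤ 3 := by exact_mod_cast (by omega : N ≤ 3)
        nlinarith
      have hN4' : (4 : ℝ) ≤ N := by exact_mod_cast hN4
      have hl := upb_log20 (X * a0) (by linarith) (by linarith)
      have : (2 * b + 1) * Real.log (X * a0) ≤ (2 * b + 1) * 3 := by gcongr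
      nlinarith
    · have hN40 : (40 : ℝ) ≤ N := by exact_mod_cast hN
      have hρN : (N : ℝ) / 400 ≤ ρ := by
        have : 1 / 400 ≤ b ^ 2 * R ^ 2 := by nlinarith
        rw [hρdef]; nlinarith
      have hlog1 : 1 / 11 ≤ Real.log (1 + ρ) := by
        have h1 := Real.one_sub_inv_le_log_of_pos (show (0:ℝ) < 1 + ρ by linarith)
        have h2 : (1 + ρ)⁻¹ ≤ (11 / 10 : ℝ)⁻¹ := by
          gcongr; linarith
        norm_num at h2 ⊢
        linarith
      have hu2 : 3 / 22 ≤ u := by rw [hu]; linarith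
      have hgain : (3 / 25 : ℝ) * N ≤ N * u / (1 + u) := by
        rw [le_div_iff₀ hu1]; nlinarith
      have hl : Real.log (X * a0) ≤ N / 40 + 2 := by
        have h1 : Real.log (X * a0) ≤ Real.log (N / 2) := Real.log_le_log (by linarith) hYN
        have h2 : Real.log (N / 2) = Real.log (N / 2 / 20) + Real.log 20 := by
          rw [← Real.log_mul (by positivity) (by norm_num)]; congr 1; ring
        have h3 := upb_log20 20 (by norm_num) le_rfl
        have h4 := Real.log_le_sub_one_of_pos (show (0:ℝ) < N / 2 / 20 by positivity)
        linarith
      have h5 : (2 * b + 1) * Real.log (X * a0) ≤ (2 * b + 1) * (N / 40 + 2) := by gcongr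
      have hb2 : 0 ≤ 1 - 2 * b := by linarith
      nlinarith [mul_nonneg hb2 (show (0:ℝ) ≤ N - 40 by linarith),
        mul_nonneg hb (show (0:ℝ) ≤ N - 40 by linarith)]
  · -- b ≥ ω/2
    have h8 : 8 ≤ 16 * b / ω := by rw [le_div_iff₀ hω]; linarith
    have hbN : 16 * b * (1 + u) ≤ ω ^ 2 * N := by
      have h : 16 * b / ω ≤ ω * N / (1 + u) := by linarith
      rw [div_le_div_iff₀ hω hu1] at h
      nlinarith
    have hbpos : 0 < b := by linarith
    have hN16 : 16 * b * (1 + u) ≤ N := by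
      have : ω ^ 2 ≤ 1 := by nlinarith
      nlinarith
    have hN8 : 8 * (1 + u) ≤ N := by
      have : ω * (8 * (1 + u)) ≤ ω * (ω * N) := by nlinarith
      have := le_of_mul_le_mul_left this hω
      nlinarith
    have hgain : 4 * u + 8 * b * u ≤ N * u / (1 + u) := by
      rw [le_div_iff₀ hu1]; nlinarith
    have haR : a0 ≤ R + b * R ^ 2 := by
      have : r0 ^ 2 ≤ R ^ 2 := pow_le_pow_left₀ hr0 hr0R 2
      nlinarith [mul_nonneg hω.le (sq_nonneg r0), mul_le_mul_of_nonneg_left this hb]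
    have hY1 : X * a0 ≤ 2 * (b * R * N) + 2 * ρ := by
      have h1 : X ≤ 2 * b * N := by nlinarith
      calc X * a0 ≤ (2 * b * N) * (R + b * R ^ 2) := by gcongr
        _ = _ := by rw [hρdef]; ring
    have hY : X * a0 ≤ 20 + 120 * ρ := by
      rcases hcase with hN | ⟨hN, hη⟩
      · have hN39 : (N : ℝ) ≤ 39 := by exact_mod_cast hN
        -- b R N ≤ (N + b²R²N)/2
        have : b * R * N ≤ N / 8 + 2 * ρ := by
          rw [hρdef]
          nlinarith [mul_nonneg hNr (sq_nonneg (4 * b * R - 1))]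
        linarith
      · have : b * R * N ≤ 20 * ρ := by
          rw [hρdef]
          have : b * R ≤ 20 * (b * R * (b * R)) := by
            nlinarith [mul_pos hbpos hR]
          nlinarith
        linarith
    have hl : Real.log (X * a0) ≤ 3 + 4 * u := by
      have h6 : 1 + 6 * ρ ≤ (1 + ρ) ^ 6 := by
        have := one_add_mul_le_pow (show (-2:ℝ) ≤ ρ by linarith) 6
        norm_num at this; linarith
      have h7 : X * a0 ≤ 20 * (1 + ρ) ^ 6 := by linarith
      have h8 := Real.log_le_log (by linarith) h7
      rw [Real.log_mul (x := 20) (by norm_num) (by positivity), Real.log_pow] at h8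
      have h3 := upb_log20 20 (by norm_num) le_rfl
      rw [hu]; push_cast at h8; linarith
    have h5 : (2 * b + 1) * Real.log (X * a0) ≤ (2 * b + 1) * (3 + 4 * u) := by gcongr
    nlinarith

lemma upb_caseI (N : ℕ) (hN : 1 ≤ N) (b R ω θ B r0 : ℝ) (hb : 0 ≤ b) (hR : 0 < R)
    (hω : 0 < ω) (hω1 : ω ≤ 1) (hθ : 0 < θ)
    (hB : B = 8 + 12 * Real.log (1 + b ^ 2 * R ^ 2 * N))
    (hstep : B * (1 / 8 + 2 * b * θ / ω) ≤ ω * N * θ)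
    (hcase : N ≤ 39 ∨ (40 ≤ N ∧ 1 / 10 < 2 * b * R))
    (a d : ℕ → ℝ)
    (hr0 : 0 ≤ r0) (hr0R : r0 ≤ R) (ha0le : a 0 ≤ r0 + (b - ω) * r0 ^ 2)
    (hd : ∀ k, k + 1 < N → 0 ≤ d k)
    (h1 : ∀ k, k + 1 < N → a (k + 1) + d k ^ 2 ≤ a k)
    (h2 : ∀ k, k + 1 < N → a (k + 1) ≤ d k + b * d k ^ 2) :
    ∃ k, k < N ∧ a k ≤ θ := by
  by_contra hcon
  push Not at hcon
  have hpos : ∀ k, k < N → 0 < a k := fun k hk => hθ.trans (hcon k hk)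
  have ht := upb_tele N b hb a d hd hpos h1 h2 (N - 1) (by omega)
  have hlast := hcon (N - 1) (by omega)
  have hlp := hpos (N - 1) (by omega)
  have ha0 := hpos 0 (by omega)
  have hfirst := hcon 0 (by omega)
  have hlogρ : 0 ≤ Real.log (1 + b ^ 2 * R ^ 2 * N) :=
    Real.log_nonneg (by have : 0 ≤ b ^ 2 * R ^ 2 * N := by positivity
                        linarith)
  obtain ⟨u, hu⟩ : ∃ u, u = 3 / 2 * Real.log (1 + b ^ 2 * R ^ 2 * N) := ⟨_, rfl⟩
  have hBu : B = 8 * (1 + u) := by rw [hB, hu]; ring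
  have hu0 : 0 ≤ u := by rw [hu]; positivity
  have hXle : 1 / θ + 16 * b / ω ≤ ω * N / (1 + u) := by
    rw [le_div_iff₀ (by linarith)]
    rw [hBu] at hstep
    have e : (1 / θ + 16 * b / ω) * (1 + u)
      = (8 * (1 + u) * (1 / 8 + 2 * b * θ / ω)) / θ := by field_simp; ring
    rw [e, div_le_iff₀ hθ]
    exact hstep
  have hnum := upb_num N b R ω (1 / θ) (a 0) r0 u hb hR hω hω1 (by positivity) ha0
    (by rw [one_div, inv_mul_eq_div, lt_div_iff₀ hθ]; linarith) hu hXle hcase hr0 hr0R ha0le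
  have hl : Real.log (1 / θ * a 0) = Real.log (1 / θ) - Real.log (1 / a 0) := by
    rw [← Real.log_div (by positivity) (by positivity)]; congr 1; field_simp
  rw [hl] at hnum
  have hx : 1 / a (N - 1) < 1 / θ := one_div_lt_one_div_of_lt hθ hlast
  have hlx : Real.log (1 / a (N - 1)) ≤ Real.log (1 / θ) :=
    Real.log_le_log (by positivity) hx.le
  have hc : ((N - 1 : ℕ) : ℝ) = N - 1 := by push_cast [Nat.cast_sub hN]; ring
  rw [hc] at ht
  have := mul_le_mul_of_nonneg_left hlx (show 0 ≤ 2 * b + 1 by linarith)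
  linarith

lemma upb_harm (k : ℕ) : ∑ i ∈ Finset.range (k + 16), 1 / ((i : ℝ) + 1) ≤ (k : ℝ) / 16 + 3.381 := by
  induction k with
  | zero => norm_num [Finset.sum_range_succ]
  | succ k ih =>
    rw [show k + 1 + 16 = (k + 16) + 1 by ring, Finset.sum_range_succ]
    have : 1 / (((k + 16 : ℕ) : ℝ) + 1) ≤ 1 / 16 := by
      apply one_div_le_one_div_of_le (by norm_num)
      push_cast
      have : (0:ℝ) ≤ k := Nat.cast_nonneg k
      linarith
    push_cast at *
    linarith

lemma upb_caseII_ind (N : ℕ) (q ω : ℝ) (hq : 0 ≤ q) (hω : 0 < ω) (hω1 : ω ≤ 1)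
    (a d r v : ℕ → ℝ)
    (h0 : a 0 ≤ q * r 0 + v 0 - ω * r 0 ^ 2)
    (hv : ∀ k, k < N → |v k| ≤ q * r k)
    (h1 : ∀ k, k + 1 < N → a (k + 1) + d k ^ 2 ≤ a k)
    (h2 : ∀ k, k + 1 < N → a (k + 1) ≤ q * d k + (v (k + 1) - v k) - ω * r (k + 1) ^ 2)
    (k : ℕ) (hk : k + 1 < N) :
    ((k : ℝ) + 2) * (k + 3) / 2 * a (k + 1) - (k + 2) * v (k + 1) + ω * (k + 2) * r (k + 1) ^ 2
      ≤ q ^ 2 / ω * ((k + 2) / 2 + 1 / 4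
          + 3 / 4 * ∑ i ∈ Finset.range (k + 1), 1 / ((i : ℝ) + 1)) := by
  -- one step of the potential
  have step : ∀ k, k + 1 < N →
      ((k : ℝ) + 2) * (k + 3) / 2 * a (k + 1) - (k + 2) * v (k + 1) + ω * (k + 2) * r (k + 1) ^ 2
      ≤ ((k : ℝ) + 1) * (k + 2) / 2 * a k - (k + 1) * v k + ω * (k + 1) * r k ^ 2
        + (q * r k - ω * (k + 1) * r k ^ 2) + q ^ 2 * (1 / 2 + 1 / 2 * (1 / ((k : ℝ) + 1))) := by
    intro k hk
    have hk0 : (0:ℝ) ≤ k := Nat.cast_nonneg k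
    have e1 := mul_le_mul_of_nonneg_left (h1 k hk)
      (show 0 ≤ ((k : ℝ) + 1) * (k + 2) / 2 by positivity)
    have e2 := mul_le_mul_of_nonneg_left (h2 k hk) (show 0 ≤ (k : ℝ) + 2 by positivity)
    have e3 := (abs_le.1 (hv k (by omega))).1
    have e4 : ((k : ℝ) + 2) * (q * d k) - ((k : ℝ) + 1) * (k + 2) / 2 * d k ^ 2
        ≤ q ^ 2 * (1 / 2 + 1 / 2 * (1 / ((k : ℝ) + 1))) := by
      have e : q ^ 2 * (1 / 2 + 1 / 2 * (1 / ((k : ℝ) + 1)))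
          - (((k : ℝ) + 2) * (q * d k) - ((k : ℝ) + 1) * (k + 2) / 2 * d k ^ 2)
          = ((k : ℝ) + 2) / (2 * (k + 1)) * (q - (k + 1) * d k) ^ 2 := by
        field_simp; ring
      have : 0 ≤ ((k : ℝ) + 2) / (2 * (k + 1)) * (q - (k + 1) * d k) ^ 2 := by positivity
      linarith
    linarith
  have hqω : q ^ 2 ≤ q ^ 2 / ω := by
    rw [le_div_iff₀ hω]; nlinarith [sq_nonneg q]
  induction k with
  | zero =>
    have s := step 0 hk
    have e : 2 * (q * r 0) - ω * r 0 ^ 2 ≤ q ^ 2 / ω := by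
      rw [le_div_iff₀ hω]; nlinarith [sq_nonneg (q - ω * r 0)]
    norm_num at s ⊢
    linarith
  | succ k ih =>
    have hk0 : (0:ℝ) ≤ k := Nat.cast_nonneg k
    have s := step (k + 1) hk
    have i := ih (by omega)
    rw [Finset.sum_range_succ]
    have e : q * r (k + 1) - ω * (k + 2) * r (k + 1) ^ 2
        ≤ q ^ 2 / ω * (1 / 4 * (1 / ((k : ℝ) + 2))) := by
      have e' : q ^ 2 / ω * (1 / 4 * (1 / ((k : ℝ) + 2)))
          - (q * r (k + 1) - ω * (k + 2) * r (k + 1) ^ 2)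
          = 1 / (4 * ω * (k + 2)) * (q - 2 * ω * (k + 2) * r (k + 1)) ^ 2 := by
        field_simp; ring
      have : 0 ≤ 1 / (4 * ω * (k + 2)) * (q - 2 * ω * (k + 2) * r (k + 1)) ^ 2 := by positivity
      linarith
    have e5 : q ^ 2 * (1 / 2 + 1 / 2 * (1 / ((k : ℝ) + 2)))
        ≤ q ^ 2 / ω * (1 / 2 + 1 / 2 * (1 / ((k : ℝ) + 2))) := by gcongr
    push_cast at s ⊢
    have c1 : (k : ℝ) + 1 + 1 = k + 2 := by ring
    have c2 : (k : ℝ) + 1 + 2 = k + 3 := by ring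
    rw [c1, c2] at s
    rw [c1, c2]
    have c3 : q ^ 2 / ω * (((k : ℝ) + 3) / 2 + 1 / 4 +
        3 / 4 * (∑ i ∈ Finset.range (k + 1), 1 / ((i : ℝ) + 1) + 1 / ((k : ℝ) + 2)))
        = q ^ 2 / ω * (((k : ℝ) + 2) / 2 + 1 / 4 +
        3 / 4 * ∑ i ∈ Finset.range (k + 1), 1 / ((i : ℝ) + 1))
        + q ^ 2 / ω * (1 / 2 + 1 / 2 * (1 / ((k : ℝ) + 2)))
        + q ^ 2 / ω * (1 / 4 * (1 / ((k : ℝ) + 2))) := by ring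
    rw [c3]
    linarith

lemma upb_caseII (N : ℕ) (hN : 40 ≤ N) (q ω : ℝ) (hq : 0 ≤ q) (hq2 : q ^ 2 ≤ 121 / 200)
    (hω : 0 < ω) (hω1 : ω ≤ 1)
    (a d r v : ℕ → ℝ)
    (h0 : a 0 ≤ q * r 0 + v 0 - ω * r 0 ^ 2)
    (hv : ∀ k, k < N → |v k| ≤ q * r k)
    (h1 : ∀ k, k + 1 < N → a (k + 1) + d k ^ 2 ≤ a k)
    (h2 : ∀ k, k + 1 < N → a (k + 1) ≤ q * d k + (v (k + 1) - v k) - ω * r (k + 1) ^ 2) :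
    a (N - 1) * (ω * N) ≤ 1 := by
  obtain ⟨m, rfl⟩ : ∃ m, N = m + 17 + 23 := ⟨N - 40, by omega⟩
  have hind := upb_caseII_ind _ q ω hq hω hω1 a d r v h0 hv h1 h2 (m + 38) (by omega)
  have hh := upb_harm (m + 23)
  rw [show m + 23 + 16 = m + 38 + 1 by ring] at hh
  rw [show m + 17 + 23 - 1 = m + 38 + 1 by omega]
  have hvl := (abs_le.1 (hv (m + 38 + 1) (by omega))).2
  push_cast at *
  set H := ∑ i ∈ Finset.range (m + 38 + 1), 1 / ((i : ℝ) + 1) with hH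
  set A := a (m + 38 + 1)
  set V := v (m + 38 + 1)
  set r' := r (m + 38 + 1)
  have hm : (0:ℝ) ≤ m := Nat.cast_nonneg m
  have e1 : q * r' - ω * r' ^ 2 ≤ q ^ 2 / ω * (1 / 4) := by
    rw [div_mul_eq_mul_div, le_div_iff₀ hω]
    nlinarith [sq_nonneg (q - 2 * ω * r')]
  have e2 := mul_le_mul_of_nonneg_left e1 (show (0:ℝ) ≤ m + 40 by linarith)
  have e3 := mul_le_mul_of_nonneg_left hvl (show (0:ℝ) ≤ m + 40 by linarith)
  have e4 : ((m:ℝ) + 40) * (m + 41) / 2 * A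
      ≤ q ^ 2 / ω * ((m + 40) / 2 + 1 / 4 + 3 / 4 * H + (m + 40) / 4) := by
    nlinarith
  have e5 : q ^ 2 / ω * (((m:ℝ) + 40) / 2 + 1 / 4 + 3 / 4 * H + (m + 40) / 4)
      ≤ (121 / 200) / ω * (((m:ℝ) + 40) / 2 + 1 / 4
        + 3 / 4 * (((m:ℝ) + 23) / 16 + 3.381) + (m + 40) / 4) := by
    have hH0 : 0 ≤ H := Finset.sum_nonneg (fun i _ => by positivity)
    gcongr
  have e6 : (121 / 200) / ω * (((m:ℝ) + 40) / 2 + 1 / 4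
        + 3 / 4 * (((m:ℝ) + 23) / 16 + 3.381) + (m + 40) / 4) ≤ ((m:ℝ) + 41) / 2 / ω := by
    rw [div_mul_eq_mul_div]
    gcongr
    norm_num
    linarith
  have e7 := e4.trans (e5.trans e6)
  rw [le_div_iff₀ hω] at e7
  have e8 : (((m:ℝ) + 41) / 2) * (A * (ω * (m + 40))) ≤ (((m:ℝ) + 41) / 2) * 1 := by linarith
  have := le_of_mul_le_mul_left e8 (by positivity)
  rw [show (m:ℝ) + 17 + 23 = m + 40 by ring]
  exact this

lemma upb_strong {E : Type*} [NormedAddCommGroup E] [InnerProductSpace ℝ E]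
    (S : Set E) (g : E → ℝ) (hg : ConvexOn ℝ S g) (lam : ℝ) (hlam : 0 < lam) (c x u : E)
    (hx : x ∈ S) (hu : u ∈ S)
    (hmin : ∀ z ∈ S, g x + ‖x - c‖ ^ 2 / (2 * lam) ≤ g z + ‖z - c‖ ^ 2 / (2 * lam)) :
    g x + ‖x - c‖ ^ 2 / (2 * lam) + ‖u - x‖ ^ 2 / (2 * lam)
      ≤ g u + ‖u - c‖ ^ 2 / (2 * lam) := by
  have key : ∀ s : ℝ, 0 < s → s ≤ 1 →
      g x + ‖x - c‖ ^ 2 / (2 * lam) + (1 - s) * (‖u - x‖ ^ 2 / (2 * lam))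
      ≤ g u + ‖u - c‖ ^ 2 / (2 * lam) := by
    intro s hs hs1
    have hz : (1 - s) • x + s • u ∈ S := hg.1 hx hu (by linarith) hs.le (by ring)
    have h1 := hmin _ hz
    have h2 := hg.2 hx hu (show 0 ≤ 1 - s by linarith) hs.le (by ring)
    simp only [smul_eq_mul] at h2
    have e : ‖(1 - s) • x + s • u - c‖ ^ 2
        = (1 - s) * ‖x - c‖ ^ 2 + s * ‖u - c‖ ^ 2 - s * (1 - s) * ‖u - x‖ ^ 2 := by
      have e1 : (1 - s) • x + s • u - c = (1 - s) • (x - c) + s • (u - c) := by module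
      have e2 : u - x = (u - c) - (x - c) := by abel
      rw [e1, e2, norm_add_sq_real, norm_sub_sq_real (u - c) (x - c), norm_smul, norm_smul,
        inner_smul_left, inner_smul_right, mul_pow, mul_pow, Real.norm_eq_abs, Real.norm_eq_abs,
        sq_abs, sq_abs, real_inner_comm]
      simp only [conj_trivial]
      ring
    rw [e] at h1
    have e3 : ((1 - s) * ‖x - c‖ ^ 2 + s * ‖u - c‖ ^ 2 - s * (1 - s) * ‖u - x‖ ^ 2) / (2 * lam)
        = (1 - s) * (‖x - c‖ ^ 2 / (2 * lam)) + s * (‖u - c‖ ^ 2 / (2 * lam))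
          - s * (1 - s) * (‖u - x‖ ^ 2 / (2 * lam)) := by ring
    rw [e3] at h1
    have : s * (g x + ‖x - c‖ ^ 2 / (2 * lam) + (1 - s) * (‖u - x‖ ^ 2 / (2 * lam)))
      ≤ s * (g u + ‖u - c‖ ^ 2 / (2 * lam)) := by linarith
    exact le_of_mul_le_mul_left this hs
  set Q := ‖u - x‖ ^ 2 / (2 * lam) with hQ
  have hQ0 : 0 ≤ Q := by positivity
  apply le_of_forall_pos_le_add
  intro e he
  set s := e / (e + Q + 1) with hs
  have hs0 : 0 < s := by positivity
  have hs1 : s ≤ 1 := by rw [hs, div_le_one (by positivity)]; linarith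
  have hsQ : s * Q ≤ e := by
    rw [hs, div_mul_eq_mul_div, div_le_iff₀ (by positivity)]; nlinarith
  have := key s hs0 hs1
  linarith

lemma upb_descent {E : Type*} [NormedAddCommGroup E] [InnerProductSpace ℝ E]
    (S : Set E) (hS : Convex ℝ S) (f : E → ℝ) (f' : E → E) (M L : ℝ)
    (hL : 0 ≤ L)
    (hor : ∀ x ∈ S, ∀ u ∈ S, f x + ⟪f' x, u - x⟫ ≤ f u)
    (hhy : ∀ x ∈ S, ∀ y ∈ S, ‖f' x - f' y‖ ≤ 2 * M + L * ‖x - y‖)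
    (x y : E) (hx : x ∈ S) (hy : y ∈ S) :
    f y - f x - ⟪f' x, y - x⟫ ≤ 2 * M * ‖y - x‖ + L / 2 * ‖y - x‖ ^ 2 := by
  have key : ∀ m : ℕ, 0 < m →
      f y - f x - ⟪f' x, y - x⟫ ≤ 2 * M * ‖y - x‖ + L / 2 * ‖y - x‖ ^ 2 * (1 + 1 / m) := by
    intro m hm
    have hm' : (0:ℝ) < m := by exact_mod_cast hm
    let z : ℕ → E := fun j => x + ((j : ℝ) / m) • (y - x)
    have hz : ∀ j, j ≤ m → z j ∈ S := by
      intro j hj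
      have : (j : ℝ) ≤ m := by exact_mod_cast hj
      exact hS.add_smul_sub_mem hx hy ⟨by positivity, by rw [div_le_one hm']; exact this⟩
    have hind : ∀ j, j ≤ m → f (z j) - f x - ((j : ℝ) / m) * ⟪f' x, y - x⟫
        ≤ 2 * M * ‖y - x‖ * (j / m) + L / 2 * ‖y - x‖ ^ 2 * (j * (j + 1) / m ^ 2) := by
      intro j
      induction j with
      | zero => intro _; simp [z]
      | succ j ih =>
        intro hj
        have i := ih (by omega)
        have o := hor (z (j + 1)) (hz _ hj) (z j) (hz _ (by omega))
        have e1 : z j - z (j + 1) = -((1 : ℝ) / m) • (y - x) := by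
          simp only [z]; push_cast
          rw [add_sub_add_left_eq_sub, ← sub_smul]; congr 1; ring
        rw [e1, inner_smul_right] at o
        have c := hhy (z (j + 1)) (hz _ hj) x hx
        have e2 : z (j + 1) - x = (((j:ℝ) + 1) / m) • (y - x) := by
          simp only [z]; push_cast; rw [add_sub_cancel_left]
        have e3 : ‖z (j + 1) - x‖ = (((j:ℝ) + 1) / m) * ‖y - x‖ := by
          rw [e2, norm_smul, Real.norm_of_nonneg (by positivity)]
        rw [e3] at c
        have cs := real_inner_le_norm (f' (z (j + 1)) - f' x) (y - x)
        rw [inner_sub_left] at cs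
        have cs2 : ⟪f' (z (j + 1)), y - x⟫ ≤ ⟪f' x, y - x⟫ +
            (2 * M + L * ((((j:ℝ) + 1) / m) * ‖y - x‖)) * ‖y - x‖ := by
          nlinarith [mul_le_mul_of_nonneg_right c (norm_nonneg (y - x))]
        have cs3 := mul_le_mul_of_nonneg_left cs2 (show 0 ≤ (1:ℝ) / m by positivity)
        push_cast
        have r1 : 2 * M * ‖y - x‖ * (((j:ℝ) + 1) / m)
            + L / 2 * ‖y - x‖ ^ 2 * (((j:ℝ) + 1) * ((j:ℝ) + 1 + 1) / m ^ 2)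
            = 2 * M * ‖y - x‖ * ((j:ℝ) / m)
            + L / 2 * ‖y - x‖ ^ 2 * ((j:ℝ) * ((j:ℝ) + 1) / m ^ 2)
            + 1 / m * ((2 * M + L * ((((j:ℝ) + 1) / m) * ‖y - x‖)) * ‖y - x‖) := by
          field_simp; ring
        rw [r1]
        have r2 : ((j:ℝ) + 1) / m * ⟪f' x, y - x⟫
          = (j:ℝ) / m * ⟪f' x, y - x⟫ + 1 / m * ⟪f' x, y - x⟫ := by ring
        rw [r2]
        linarith
    have := hind m le_rfl
    have e : z m = y := by simp only [z]; rw [div_self hm'.ne']; simp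
    rw [e, div_self hm'.ne'] at this
    have e2 : (m:ℝ) * (m + 1) / m ^ 2 = 1 + 1 / m := by field_simp
    rw [e2] at this
    linarith
  set Q := L / 2 * ‖y - x‖ ^ 2 with hQ
  have hQ0 : 0 ≤ Q := by positivity
  apply le_of_forall_pos_le_add
  intro e he
  obtain ⟨m, hm⟩ := exists_nat_gt (Q / e)
  have hm0 : 0 < m := by
    have : (0:ℝ) < m := lt_of_le_of_lt (by positivity) hm
    exact_mod_cast this
  have hm' : (0:ℝ) < m := by exact_mod_cast hm0
  have := key m hm0
  have h2 : Q * (1 / m) ≤ e := by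
    rw [mul_one_div, div_le_iff₀ hm']
    rw [div_lt_iff₀ he] at hm
    linarith
  linarith

/-- Jung-type lemma: a finite family of diameter `ρ` lies in a ball of squared radius `ρ²/2`. -/
lemma upb_jung {E ι : Type*} [NormedAddCommGroup E] [InnerProductSpace ℝ E]
    [Fintype ι] [Nonempty ι] (g : ι → E) (P : ℝ) (hg : ∀ i j, ‖g i - g j‖ ^ 2 ≤ P) :
    ∃ c : E, ∀ j, ‖g j - c‖ ^ 2 ≤ P / 2 := by
  classical
  let V : (ι → ℝ) → ℝ := fun w => ∑ i, w i * ‖g i‖ ^ 2 - ‖∑ i, w i • g i‖ ^ 2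
  have hcont : Continuous V := by fun_prop
  have hne : (stdSimplex ℝ ι).Nonempty :=
    ⟨_, single_mem_stdSimplex ℝ (Classical.arbitrary ι)⟩
  obtain ⟨w, hw, hmax⟩ := (isCompact_stdSimplex (𝕜 := ℝ) ι).exists_isMaxOn hne hcont.continuousOn
  set c := ∑ i, w i • g i with hc
  have hsum : ∑ i, w i = 1 := hw.2
  -- moment identity
  have hmom : ∀ p : E, ∑ i, w i * ‖g i - p‖ ^ 2 = V w + ‖c - p‖ ^ 2 := by
    intro p
    have : ∀ i, w i * ‖g i - p‖ ^ 2
        = w i * ‖g i‖ ^ 2 - 2 * ⟪w i • g i, p⟫ + w i * ‖p‖ ^ 2 := by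
      intro i; rw [norm_sub_sq_real, inner_smul_left]; simp only [conj_trivial]; ring
    simp only [this]
    rw [Finset.sum_add_distrib, Finset.sum_sub_distrib, ← Finset.mul_sum, ← sum_inner,
      ← Finset.sum_mul, hsum, norm_sub_sq_real]
    simp only [V, ← hc]; ring
  have hVP : V w ≤ P / 2 := by
    have h1 : ∀ j, V w + ‖c - g j‖ ^ 2 ≤ P := by
      intro j
      rw [← hmom]
      calc ∑ i, w i * ‖g i - g j‖ ^ 2 ≤ ∑ i, w i * P :=
            Finset.sum_le_sum fun i _ => mul_le_mul_of_nonneg_left (hg i j) (hw.1 i)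
        _ = P := by rw [← Finset.sum_mul, hsum, one_mul]
    have h2 : ∑ j, w j * (V w + ‖c - g j‖ ^ 2) ≤ ∑ j, w j * P :=
      Finset.sum_le_sum fun i _ => mul_le_mul_of_nonneg_left (h1 i) (hw.1 i)
    rw [← Finset.sum_mul, hsum] at h2
    simp only [mul_add] at h2
    rw [Finset.sum_add_distrib, ← Finset.sum_mul, hsum] at h2
    simp only [norm_sub_rev c] at h2
    rw [hmom c] at h2
    simp at h2
    linarith
  refine ⟨c, fun j => ?_⟩
  have key : ∀ s : ℝ, 0 < s → s < 1 → (1 - s) * ‖g j - c‖ ^ 2 ≤ V w := by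
    intro s hs hs1
    let w' : ι → ℝ := (1 - s) • w + s • Pi.single j 1
    have hw' : w' ∈ stdSimplex ℝ ι :=
      convex_stdSimplex ℝ ι hw (single_mem_stdSimplex ℝ j) (by linarith) hs.le (by ring)
    have hm : V w' ≤ V w := hmax hw'
    have e1 : ∑ i, w' i * ‖g i‖ ^ 2 = (1 - s) * ∑ i, w i * ‖g i‖ ^ 2 + s * ‖g j‖ ^ 2 := by
      simp [w', add_mul, Finset.sum_add_distrib, Finset.mul_sum, mul_assoc, Pi.single_apply]
    have e2 : ∑ i, w' i • g i = (1 - s) • c + s • g j := by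
      simp [w', add_smul, Finset.sum_add_distrib, Finset.smul_sum, mul_smul, Pi.single_apply, hc]
    have e3 : V w' = (1 - s) * V w + s * (1 - s) * ‖g j - c‖ ^ 2 := by
      simp only [V]
      rw [e1, e2, ← hc, norm_add_sq_real, norm_sub_sq_real, norm_smul, norm_smul,
        inner_smul_left, inner_smul_right, mul_pow, mul_pow, Real.norm_eq_abs, Real.norm_eq_abs,
        sq_abs, sq_abs, real_inner_comm]
      simp only [conj_trivial]
      ring
    rw [e3] at hm
    have : s * ((1 - s) * ‖g j - c‖ ^ 2) ≤ s * V w := by linarith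
    exact le_of_mul_le_mul_left this hs
  refine le_trans ?_ hVP
  set Q := ‖g j - c‖ ^ 2 with hQ
  have hQ0 : 0 ≤ Q := by positivity
  apply le_of_forall_pos_le_add
  intro e he
  set s := e / (e + Q + 1) with hs
  have hs0 : 0 < s := by positivity
  have hs1 : s < 1 := by rw [hs, div_lt_one (by positivity)]; linarith
  have hsQ : s * Q ≤ e := by
    rw [hs, div_mul_eq_mul_div, div_le_iff₀ (by positivity)]; nlinarith
  have := key s hs0 hs1
  linarith

/-- Lemma `lemserious`: if the stepsize of a cycle of U-PB satisfies
`λ ≤ (1−χ)²N̄ε̄/(2(M_f² + ε̄L_f)B)`, then the cycle (of at most `N̄` iterations, starting at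
iteration `i`) must be a serious one, i.e. some iteration `l ∈ [i, i+N̄−1]` satisfies
`t_l ≤ (1−χ)ε̄/2`. -/
theorem upb_small_stepsize_serious
    {n : ℕ} (f h : EuclideanSpace ℝ (Fin n) → ℝ)
    (domf domh : Set (EuclideanSpace ℝ (Fin n)))
    (f' : EuclideanSpace ℝ (Fin n) → EuclideanSpace ℝ (Fin n))
    (Mf Lf : ℝ) (hMf : 0 < Mf) (hLf : 0 ≤ Lf)
    (hsub : domh ⊆ domf)
    (hfconv : ConvexOn ℝ domf f) (hhconv : ConvexOn ℝ domh h)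
    (hflsc : LowerSemicontinuousOn f domf) (hhlsc : LowerSemicontinuousOn h domh)
    (horacle : ∀ x ∈ domh, ∀ u ∈ domf, f x + ⟪f' x, u - x⟫ ≤ f u)
    (hhybrid : ∀ x ∈ domh, ∀ y ∈ domh, ‖f' x - f' y‖ ≤ 2 * Mf + Lf * ‖x - y‖)
    (D : ℝ) (hD : 0 < D) (hdiam : ∀ a ∈ domh, ∀ b ∈ domh, ‖a - b‖ ≤ D)
    (χ ε lam : ℝ) (hχ0 : 0 ≤ χ) (hχ1 : χ < 1) (hε : 0 < ε) (hlam : 0 < lam)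
    (Nbar : ℕ) (hNbar : 1 ≤ Nbar)
    (B : ℝ) (hB : B = 8 + 12 * Real.log (1 + Lf ^ 2 * D ^ 2 * Nbar / (16 * Mf ^ 2)))
    (hstep : lam ≤ (1 - χ) ^ 2 * Nbar * ε / (2 * (Mf ^ 2 + ε * Lf) * B))
    (xhat : EuclideanSpace ℝ (Fin n)) (hxhat : xhat ∈ domh)
    (i : ℕ)
    -- the iterations of the cycle, `l = i, …, i + N̄ − 1`
    (F : ℕ → EuclideanSpace ℝ (Fin n) → ℝ)
    (x : ℕ → EuclideanSpace ℝ (Fin n)) (φb t : ℕ → ℝ)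
    (hFconv : ∀ l, i ≤ l → l < i + Nbar → ConvexOn ℝ domf (F l))
    (hFle : ∀ l, i ≤ l → l < i + Nbar → ∀ u ∈ domf, F l u ≤ f u)
    (hFilow : ∀ u ∈ domf, f xhat + ⟪f' xhat, u - xhat⟫ ≤ F i u)
    (hxdom : ∀ l, i ≤ l → l < i + Nbar → x l ∈ domh)
    (hxmin : ∀ l, i ≤ l → l < i + Nbar → ∀ u ∈ domh,
      F l (x l) + h (x l) + ‖x l - xhat‖ ^ 2 / (2 * lam)
        ≤ F l u + h u + ‖u - xhat‖ ^ 2 / (2 * lam))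
    (hφbi : φb i = f (x i) + h (x i) + χ / (2 * lam) * ‖x i - xhat‖ ^ 2)
    (hφbrec : ∀ l, i ≤ l → l + 1 < i + Nbar →
      φb (l + 1) = min (φb l)
        (f (x (l + 1)) + h (x (l + 1)) + χ / (2 * lam) * ‖x (l + 1) - xhat‖ ^ 2))
    (ht : ∀ l, i ≤ l → l < i + Nbar →
      t l = φb l - (F l (x l) + h (x l) + ‖x l - xhat‖ ^ 2 / (2 * lam)))
    (hbundle : ∀ l, i ≤ l → l + 1 < i + Nbar →
      ∃ fbar : EuclideanSpace ℝ (Fin n) → ℝ,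
        ConvexOn ℝ domf fbar ∧ (∀ u ∈ domf, fbar u ≤ f u) ∧
        fbar (x l) = F l (x l) ∧
        (∀ u ∈ domh, fbar (x l) + h (x l) + ‖x l - xhat‖ ^ 2 / (2 * lam)
          ≤ fbar u + h u + ‖u - xhat‖ ^ 2 / (2 * lam)) ∧
        (∀ u ∈ domf, fbar u ≤ F (l + 1) u) ∧
        (∀ u ∈ domf, f (x l) + ⟪f' (x l), u - x l⟫ ≤ F (l + 1) u)) :
    ∃ l, i ≤ l ∧ l < i + Nbar ∧ t l ≤ (1 - χ) * ε / 2 := by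
  have hω : 0 < 1 - χ := by linarith
  have hω1 : 1 - χ ≤ 1 := by linarith
  have hNr : (1:ℝ) ≤ Nbar := by exact_mod_cast hNbar
  have hdomconv : Convex ℝ domh := hhconv.1
  -- linearization error
  have hdesc : ∀ y ∈ domh, ∀ z ∈ domh,
      f z - f y - ⟪f' y, z - y⟫ ≤ 2 * Mf * ‖z - y‖ + Lf / 2 * ‖z - y‖ ^ 2 := by
    intro y hy z hz
    exact upb_descent domh hdomconv f f' Mf Lf hLf
      (fun p hp u hu => horacle p hp u (hsub hu)) hhybrid y z hy hz
  -- φb below values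
  have hφle : ∀ l, i ≤ l → l < i + Nbar →
      φb l ≤ f (x l) + h (x l) + χ / (2 * lam) * ‖x l - xhat‖ ^ 2 := by
    intro l hl hl2
    rcases Nat.eq_or_lt_of_le hl with rfl | hlt
    · exact hφbi.le
    · obtain ⟨m, rfl⟩ : ∃ m, l = m + 1 := ⟨l - 1, by omega⟩
      rw [hφbrec m (by omega) hl2]
      exact min_le_right _ _
  -- the first iteration
  have G5 : t i ≤ f (x i) - f xhat - ⟪f' xhat, x i - xhat⟫
      - (1 - χ) * (‖x i - xhat‖ ^ 2 / (2 * lam)) := by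
    have h1 := ht i le_rfl (by omega)
    have h2 := hφle i le_rfl (by omega)
    have h3 := hFilow (x i) (hsub (hxdom i le_rfl (by omega)))
    have e : χ / (2 * lam) * ‖x i - xhat‖ ^ 2 = χ * (‖x i - xhat‖ ^ 2 / (2 * lam)) := by ring
    rw [e] at h2
    linarith
  have G34 : ∀ l, i ≤ l → l + 1 < i + Nbar →
      t (l + 1) ≤ t l - ‖x (l + 1) - x l‖ ^ 2 / (2 * lam) ∧
      t (l + 1) ≤ f (x (l + 1)) - f (x l) - ⟪f' (x l), x (l + 1) - x l⟫
        - (1 - χ) * (‖x (l + 1) - xhat‖ ^ 2 / (2 * lam)) := by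
    intro l hl hl2
    obtain ⟨fbar, hbc, -, hbx, hbmin, hbF, hlF⟩ := hbundle l hl hl2
    have hx1 := hxdom l hl (by omega)
    have hx2 := hxdom (l + 1) (by omega) hl2
    have h1 := ht l hl (by omega)
    have h2 := ht (l + 1) (by omega) hl2
    constructor
    · have hs := upb_strong domh (fun u => fbar u + h u)
        ((hbc.subset hsub hdomconv).add hhconv) lam hlam xhat (x l) (x (l + 1)) hx1 hx2 hbmin
      have h3 := hbF (x (l + 1)) (hsub hx2)
      have h4 : φb (l + 1) ≤ φb l := by rw [hφbrec l hl hl2]; exact min_le_left _ _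
      rw [hbx] at hs
      linarith
    · have h3 := hlF (x (l + 1)) (hsub hx2)
      have h4 := hφle (l + 1) (by omega) hl2
      have e : χ / (2 * lam) * ‖x (l + 1) - xhat‖ ^ 2
        = χ * (‖x (l + 1) - xhat‖ ^ 2 / (2 * lam)) := by ring
      rw [e] at h4
      linarith
  -- normalization
  obtain ⟨σ, hσ⟩ : ∃ σ, σ = 4 * lam * Mf := ⟨_, rfl⟩
  obtain ⟨cc, hcc⟩ : ∃ cc, cc = 8 * lam * Mf ^ 2 := ⟨_, rfl⟩
  have hσ0 : 0 < σ := by rw [hσ]; positivity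
  have hcc0 : 0 < cc := by rw [hcc]; positivity
  have hsq : ∀ y : ℝ, y ^ 2 / (2 * lam) = cc * (y / σ) ^ 2 := by
    intro y; rw [hcc, hσ]; field_simp; ring
  have hlin : ∀ y : ℝ, 2 * Mf * y = cc * (y / σ) := by
    intro y; rw [hcc, hσ]; field_simp; ring
  have hquad : ∀ y : ℝ, Lf / 2 * y ^ 2 = cc * (lam * Lf * (y / σ) ^ 2) := by
    intro y; rw [hcc, hσ]; field_simp; ring
  obtain ⟨θ, hθ⟩ : ∃ θ, θ = (1 - χ) * ε / 2 / cc := ⟨_, rfl⟩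
  have hθ0 : 0 < θ := by rw [hθ]; positivity
  have hlogB : 0 ≤ Real.log (1 + Lf ^ 2 * D ^ 2 * Nbar / (16 * Mf ^ 2)) :=
    Real.log_nonneg (by
      have : 0 ≤ Lf ^ 2 * D ^ 2 * Nbar / (16 * Mf ^ 2) := by positivity
      linarith)
  have hB8 : 8 ≤ B := by rw [hB]; linarith
  have hstep' : B * (1 / 8 + 2 * (lam * Lf) * θ / (1 - χ)) ≤ (1 - χ) * Nbar * θ := by
    have hden : 0 < 2 * (Mf ^ 2 + ε * Lf) * B := by positivity
    rw [le_div_iff₀ hden] at hstep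
    have e1 : B * (1 / 8 + 2 * (lam * Lf) * θ / (1 - χ))
        = (lam * (2 * (Mf ^ 2 + ε * Lf) * B)) / (16 * lam * Mf ^ 2) := by
      rw [hθ, hcc]; field_simp; ring
    have e2 : (1 - χ) * Nbar * θ = ((1 - χ) ^ 2 * Nbar * ε) / (16 * lam * Mf ^ 2) := by
      rw [hθ, hcc]; field_simp; ring
    rw [e1, e2]
    gcongr
  have hR : 0 < D / σ := by positivity
  -- reduction to the normalized statement
  suffices hmain : ∃ k, k < Nbar ∧ t (i + k) / cc ≤ θ by
    obtain ⟨k, hk, hle⟩ := hmain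
    refine ⟨i + k, by omega, by omega, ?_⟩
    rw [hθ] at hle
    exact (div_le_div_iff_of_pos_right hcc0).1 hle
  have hn1 : ∀ k, k + 1 < Nbar →
      t (i + (k + 1)) / cc + (‖x (i + (k + 1)) - x (i + k)‖ / σ) ^ 2 ≤ t (i + k) / cc := by
    intro k hk
    have := (G34 (i + k) (by omega) (by omega)).1
    rw [hsq] at this
    rw [← add_assoc, div_add' _ _ _ hcc0.ne', div_le_div_iff_of_pos_right hcc0]
    linarith
  by_cases hcase : Nbar ≤ 39 ∨ (40 ≤ Nbar ∧ 1 / 10 < 2 * (lam * Lf) * (D / σ))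
  · refine upb_caseI Nbar hNbar (lam * Lf) (D / σ) (1 - χ) θ B (‖x i - xhat‖ / σ)
      (by positivity) hR hω hω1 hθ0 ?_ hstep' hcase (fun k => t (i + k) / cc)
      (fun k => ‖x (i + (k + 1)) - x (i + k)‖ / σ) (by positivity) ?_ ?_
      (fun k _ => by positivity) hn1 ?_
    · rw [hB]; congr 4; rw [hσ]; field_simp; ring
    · exact div_le_div_of_nonneg_right (hdiam _ (hxdom i le_rfl (by omega)) _ hxhat) hσ0.le
    · have h1 := hdesc xhat hxhat (x i) (hxdom i le_rfl (by omega))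
      rw [hlin, hquad] at h1
      rw [hsq] at G5
      simp only [add_zero]
      rw [div_le_iff₀ hcc0]
      linarith
    · intro k hk
      have h1 := hdesc (x (i + k)) (hxdom _ (by omega) (by omega)) (x (i + k + 1))
        (hxdom _ (by omega) (by omega))
      have h2 := (G34 (i + k) (by omega) (by omega)).2
      rw [hlin, hquad] at h1
      have h3 : 0 ≤ (1 - χ) * (‖x (i + k + 1) - xhat‖ ^ 2 / (2 * lam)) := by positivity
      simp only [← add_assoc]
      rw [div_le_iff₀ hcc0]
      linarith
  · push Not at hcase
    have hN40 : 40 ≤ Nbar := by omega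
    have hη := hcase.2 hN40
    have hLD : Lf * D ≤ Mf / 5 := by
      have e : 2 * (lam * Lf) * (D / σ) = Lf * D / (2 * Mf) := by rw [hσ]; field_simp; ring
      rw [e, div_le_iff₀ (by positivity)] at hη
      linarith
    have hdiamg : ∀ p ∈ domh, ∀ y ∈ domh, ‖f' p - f' y‖ ^ 2 ≤ (11 / 5 * Mf) ^ 2 := by
      intro p hp y hy
      apply pow_le_pow_left₀ (norm_nonneg _)
      have h1 := hhybrid p hp y hy
      have h2 := mul_le_mul_of_nonneg_left (hdiam p hp y hy) hLf
      linarith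
    let g : Option (Fin Nbar) → EuclideanSpace ℝ (Fin n) :=
      fun o => o.elim (f' xhat) (fun k => f' (x (i + k)))
    have hg : ∀ o, ∃ p ∈ domh, g o = f' p := by
      intro o
      cases o with
      | none => exact ⟨xhat, hxhat, rfl⟩
      | some k => exact ⟨x (i + k), hxdom _ (by omega) (by omega), rfl⟩
    obtain ⟨c, hc⟩ := upb_jung g ((11 / 5 * Mf) ^ 2) (by
      intro o o'
      obtain ⟨p, hp, e⟩ := hg o
      obtain ⟨p', hp', e'⟩ := hg o'
      rw [e, e']; exact hdiamg p hp p' hp')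
    obtain ⟨q, hq⟩ : ∃ q, q = Real.sqrt (121 / 200) := ⟨_, rfl⟩
    have hq0 : 0 ≤ q := by rw [hq]; positivity
    have hq2 : q ^ 2 = 121 / 200 := by rw [hq]; exact Real.sq_sqrt (by norm_num)
    have hc' : ∀ o, ‖g o - c‖ ≤ 2 * Mf * q := by
      intro o
      apply le_of_sq_le_sq _ (by positivity)
      rw [mul_pow, hq2]
      have := hc o
      nlinarith
    -- Cauchy–Schwarz
    have hcs : ∀ o, ∀ w : EuclideanSpace ℝ (Fin n),
        |⟪g o, w⟫ - ⟪c, w⟫| ≤ cc * (q * (‖w‖ / σ)) := by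
      intro o w
      rw [← inner_sub_left]
      calc |⟪g o - c, w⟫| ≤ ‖g o - c‖ * ‖w‖ := abs_real_inner_le_norm _ _
        _ ≤ 2 * Mf * q * ‖w‖ := by gcongr; exact hc' o
        _ = q * (2 * Mf * ‖w‖) := by ring
        _ = _ := by rw [hlin]; ring
    have hgx : ∀ k, k < Nbar → ∀ w : EuclideanSpace ℝ (Fin n),
        |⟪f' (x (i + k)), w⟫ - ⟪c, w⟫| ≤ cc * (q * (‖w‖ / σ)) := by
      intro k hk w
      exact hcs (some ⟨k, hk⟩) w
    have hgh : ∀ w : EuclideanSpace ℝ (Fin n),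
        |⟪f' xhat, w⟫ - ⟪c, w⟫| ≤ cc * (q * (‖w‖ / σ)) := fun w => hcs none w
    have hfin := upb_caseII Nbar hN40 q (1 - χ) hq0 hq2.le hω hω1
      (fun k => t (i + k) / cc)
      (fun k => ‖x (i + (k + 1)) - x (i + k)‖ / σ)
      (fun k => ‖x (i + k) - xhat‖ / σ)
      (fun k => (f (x (i + k)) - f xhat - ⟪c, x (i + k) - xhat⟫) / cc)
      (by
        have h1 := (abs_le.1 (hgh (x i - xhat))).1
        rw [hsq] at G5
        simp only [add_zero]
        rw [div_le_iff₀ hcc0]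
        have e : (q * (‖x i - xhat‖ / σ) + (f (x i) - f xhat - ⟪c, x i - xhat⟫) / cc
            - (1 - χ) * (‖x i - xhat‖ / σ) ^ 2) * cc
            = cc * (q * (‖x i - xhat‖ / σ)) + (f (x i) - f xhat - ⟪c, x i - xhat⟫)
            - (1 - χ) * (cc * (‖x i - xhat‖ / σ) ^ 2) := by field_simp
        rw [e]
        linarith)
      (by
        intro k hk
        have hxk := hxdom (i + k) (by omega) (by omega)
        have h1 := (abs_le.1 (hgh (x (i + k) - xhat))).1
        have h2 := (abs_le.1 (hgx k hk (x (i + k) - xhat))).2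
        have h3 := horacle xhat hxhat _ (hsub hxk)
        have h4 := horacle _ hxk xhat (hsub hxhat)
        rw [← neg_sub (x (i + k)) xhat, inner_neg_right] at h4
        rw [abs_div, abs_of_pos hcc0, div_le_iff₀ hcc0, abs_le]
        constructor <;> linarith)
      hn1
      (by
        intro k hk
        have h1 := (abs_le.1 (hgx k (by omega) (x (i + k + 1) - x (i + k)))).1
        have h2 := (G34 (i + k) (by omega) (by omega)).2
        rw [hsq] at h2
        simp only [← add_assoc]
        rw [div_le_iff₀ hcc0]
        have e1 : ⟪c, x (i + k + 1) - x (i + k)⟫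
            = ⟪c, x (i + k + 1) - xhat⟫ - ⟪c, x (i + k) - xhat⟫ := by
          rw [← inner_sub_right]; congr 1; abel
        have e : (q * (‖x (i + k + 1) - x (i + k)‖ / σ)
            + ((f (x (i + k + 1)) - f xhat - ⟪c, x (i + k + 1) - xhat⟫) / cc
              - (f (x (i + k)) - f xhat - ⟪c, x (i + k) - xhat⟫) / cc)
            - (1 - χ) * (‖x (i + k + 1) - xhat‖ / σ) ^ 2) * cc
            = cc * (q * (‖x (i + k + 1) - x (i + k)‖ / σ))
            + ((f (x (i + k + 1)) - f xhat - ⟪c, x (i + k + 1) - xhat⟫)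
              - (f (x (i + k)) - f xhat - ⟪c, x (i + k) - xhat⟫))
            - (1 - χ) * (cc * (‖x (i + k + 1) - xhat‖ / σ) ^ 2) := by field_simp
        rw [e]
        linarith)
    refine ⟨Nbar - 1, by omega, ?_⟩
    have h1 : 1 ≤ θ * ((1 - χ) * Nbar) := by
      have h2 : 0 ≤ 2 * (lam * Lf) * θ / (1 - χ) := by positivity
      have h3 : 8 * (1 / 8 : ℝ) ≤ B * (1 / 8 + 2 * (lam * Lf) * θ / (1 - χ)) := by
        apply mul_le_mul hB8 (by linarith) (by norm_num) (by linarith)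
      linarith
    exact le_of_mul_le_mul_right (hfin.trans h1) (by positivity)
end
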